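/- arXiv:1407.7422 — 2 statements merged into one kernel-verified Lean document; each statement's English description precedes it below -/
import Mathlib

section
/- Let 1 < q < p. For every open bounded convex set Ω ⊂ ℝ^N and every open ball B ⊂ ℝ^N one has μ_{p,q}(Ω) ≥ (π_p / (|B|^{1/q − 1/p} · diam(B)))^p · (diam(B)/diam(Ω))^{p + Np/q − N}. -/
open MeasureTheory Metric Set Real

noncomputable section

/-- The Rayleigh quotient `(∫_Ω |∇v|^p) / (∫_Ω |v|^q)^(p/q)`, where the gradient is
understood as the (a.e. defined) Fréchet derivative. -/
def rayleighQuot {N : ℕ} (p q : ℝ) (Ω : Set (EuclideanSpace ℝ (Fin N)))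
    (v : EuclideanSpace ℝ (Fin N) → ℝ) : ℝ :=
  (∫ x in Ω, ‖fderiv ℝ v x‖ ^ p) / (∫ x in Ω, |v x| ^ q) ^ (p / q)

/-- The first (generalized) Dirichlet eigenvalue `λ_{p,q}(Ω)`: infimum of the Rayleigh
quotient over nontrivial smooth functions compactly supported in `Ω`. -/
def lambdaPQ {N : ℕ} (p q : ℝ) (Ω : Set (EuclideanSpace ℝ (Fin N))) : ℝ :=
  sInf { R : ℝ | ∃ v : EuclideanSpace ℝ (Fin N) → ℝ,
    ContDiff ℝ (⊤ : ℕ∞) v ∧ HasCompactSupport v ∧ tsupport v ⊆ Ω ∧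
    (∃ x ∈ Ω, v x ≠ 0) ∧ R = rayleighQuot p q Ω v }

/-- The first nontrivial (generalized) Neumann eigenvalue `μ_{p,q}(Ω)`: infimum of the
Rayleigh quotient over nontrivial Lipschitz functions on the closure of `Ω` satisfying
the constraint `∫_Ω |v|^(q-2) v = 0`. -/
def muPQ {N : ℕ} (p q : ℝ) (Ω : Set (EuclideanSpace ℝ (Fin N))) : ℝ :=
  sInf { R : ℝ | ∃ v : EuclideanSpace ℝ (Fin N) → ℝ, ∃ K : NNReal,
    LipschitzOnWith K v (closure Ω) ∧ (∃ x ∈ Ω, v x ≠ 0) ∧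
    (∫ x in Ω, |v x| ^ (q - 2) * v x) = 0 ∧ R = rayleighQuot p q Ω v }

/-- `q` is below the critical Sobolev exponent `p* = Np/(N-p)` (with `p* = ∞` if `p ≥ N`). -/
def ltCritical (N : ℕ) (p q : ℝ) : Prop := p < N → q < N * p / (N - p)

end

/-- The constant `π_p = 2 (p-1)^(1/p) (π/p) / sin(π/p)`. -/
noncomputable def piP (p : ℝ) : ℝ := 2 * (p - 1) ^ (1 / p) * (π / p) / Real.sin (π / p)

section

open scoped Pointwise ENNReal Topology

lemma bm1_compact {A B : Set ℝ} (hA : IsCompact A) (hB : IsCompact B)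
    (hA' : A.Nonempty) (hB' : B.Nonempty) : volume A + volume B ≤ volume (A + B) := by
  obtain ⟨a, ha, hamax⟩ := hA.exists_isGreatest hA'
  obtain ⟨b, hb, hbmin⟩ := hB.exists_isLeast hB'
  have h1 : (A + {b}) ∪ ({a} + B) ⊆ A + B := by
    apply union_subset
    · exact add_subset_add_left (by simpa using hb)
    · exact add_subset_add_right (by simpa using ha)
  have h2 : (A + {b}) ∩ ({a} + B) ⊆ {a + b} := by
    rintro x ⟨hx1, hx2⟩
    simp only [add_singleton, singleton_add, mem_image] at hx1 hx2
    obtain ⟨y, hy, rfl⟩ := hx1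
    obtain ⟨z, hz, hz2⟩ := hx2
    have := hamax hy
    have := hbmin hz
    simp only [mem_singleton_iff]
    linarith
  have h3 : volume ((A + {b}) ∩ ({a} + B)) = 0 :=
    measure_mono_null h2 (by simp)
  have mB : MeasurableSet ({a} + B) := (isCompact_singleton.add hB).measurableSet
  have h4 := measure_union_add_inter (μ := volume) (A + {b}) mB
  rw [h3, add_zero] at h4
  have h5 : volume (A + {b}) = volume A := by
    simp only [add_singleton]
    exact measure_preimage_add_right volume (-b) A ▸ by
      congr 1; ext x; simp
  have h6 : volume ({a} + B) = volume B := by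
    rw [singleton_add]
    exact measure_preimage_add volume (-a) B ▸ by
      congr 1; ext x; simp
  rw [← h5, ← h6, ← h4]
  exact measure_mono h1

lemma bm1 {A B : Set ℝ} (hA : MeasurableSet A) (hB : MeasurableSet B)
    (hA' : A.Nonempty) (hB' : B.Nonempty) : volume A + volume B ≤ volume (A + B) := by
  have key : ∀ A' ⊆ A, IsCompact A' → ∀ B' ⊆ B, IsCompact B' →
      volume A' + volume B' ≤ volume (A + B) := by
    intro A' hAs hAc B' hBs hBc
    obtain ⟨a, ha⟩ := hA'
    obtain ⟨b, hb⟩ := hB'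
    have := bm1_compact (hAc.insert a) (hBc.insert b) (insert_nonempty _ _) (insert_nonempty _ _)
    calc volume A' + volume B' ≤ volume (insert a A') + volume (insert b B') :=
          add_le_add (measure_mono (subset_insert _ _)) (measure_mono (subset_insert _ _))
      _ ≤ _ := this
      _ ≤ volume (A + B) := measure_mono (add_subset_add (insert_subset ha hAs) (insert_subset hb hBs))
  rw [hA.measure_eq_iSup_isCompact, hB.measure_eq_iSup_isCompact]
  simp only [iSup_and']
  refine ENNReal.iSup_add_iSup_le ?_ 
  intro A' B'
  by_cases h1 : A' ⊆ A ∧ IsCompact A' 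
  · by_cases h2 : B' ⊆ B ∧ IsCompact B'
    · simp only [h1, h2]
      simpa using key _ h1.1 h1.2 _ h2.1 h2.2
    · simp only [h1, h2]
      simpa using key _ h1.1 h1.2 ∅ (by simp) (by simp)
  · by_cases h2 : B' ⊆ B ∧ IsCompact B'
    · simp only [h1, h2]
      simpa using key ∅ (by simp) (by simp) _ h2.1 h2.2
    · simp [h1, h2]

lemma pl1_norm {f g h : ℝ → ℝ} (hf : Measurable f) (hg : Measurable g) (hh : Measurable h)
    (f0 : ∀ x, 0 ≤ f x) (g0 : ∀ x, 0 ≤ g x) (h0 : ∀ x, 0 ≤ h x)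
    (f1 : ∀ x, f x ≤ 1) (g1 : ∀ x, g x ≤ 1)
    (fs : ∀ l < 1, ∃ x, l < f x) (gs : ∀ l < 1, ∃ x, l < g x) {t : ℝ} (t0 : 0 < t) (t1 : t < 1)
    (H : ∀ x y l, l < 1 → l < f x → l < g y → l < h ((1 - t) * x + t * y)) :
    ENNReal.ofReal (1 - t) * (∫⁻ x, ENNReal.ofReal (f x)) + ENNReal.ofReal t * (∫⁻ x, ENNReal.ofReal (g x))
      ≤ ∫⁻ x, ENNReal.ofReal (h x) := by
  rw [lintegral_eq_lintegral_meas_lt volume (Filter.Eventually.of_forall f0) hf.aemeasurable,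
    lintegral_eq_lintegral_meas_lt volume (Filter.Eventually.of_forall g0) hg.aemeasurable,
    lintegral_eq_lintegral_meas_lt volume (Filter.Eventually.of_forall h0) hh.aemeasurable]
  have mf : Measurable fun l : ℝ => volume {a | l < f a} :=
    Antitone.measurable (fun a b hab => measure_mono fun x hx => lt_of_le_of_lt hab hx)
  have mg : Measurable fun l : ℝ => volume {a | l < g a} :=
    Antitone.measurable (fun a b hab => measure_mono fun x hx => lt_of_le_of_lt hab hx)
  rw [← lintegral_const_mul _ mf, ← lintegral_const_mul _ mg, ← lintegral_add_left (mf.const_mul _)]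
  apply setLIntegral_mono' measurableSet_Ioi
  intro l hl
  by_cases hl1 : l < 1
  · have e1 : ENNReal.ofReal (1 - t) * volume {a | l < f a} = volume ((1 - t) • {a | l < f a}) := by
      rw [Measure.addHaar_smul]; simp [abs_of_pos (sub_pos.2 t1)]
    have e2 : ENNReal.ofReal t * volume {a | l < g a} = volume (t • {a | l < g a}) := by
      rw [Measure.addHaar_smul]; simp [abs_of_pos t0]
    rw [e1, e2]
    have mA : MeasurableSet ((1 - t) • {a | l < f a}) :=
      (measurableSet_lt measurable_const hf).const_smul₀ _
    have mB : MeasurableSet (t • {a | l < g a}) :=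
      (measurableSet_lt measurable_const hg).const_smul₀ _
    refine (bm1 mA mB ?_ ?_).trans (measure_mono ?_)
    · exact Set.Nonempty.image _ (fs l hl1)
    · exact Set.Nonempty.image _ (gs l hl1)
    · rintro _ ⟨_, ⟨x, hx, rfl⟩, _, ⟨y, hy, rfl⟩, rfl⟩
      exact H x y l hl1 hx hy
  · have e1 : {a | l < f a} = ∅ := by
      ext x; simp; linarith [f1 x]
    have e2 : {a | l < g a} = ∅ := by
      ext x; simp; linarith [g1 x]
    simp [e1, e2]

lemma ennreal_amgm {a b : ℝ≥0∞} {t : ℝ} (t0 : 0 < t) (t1 : t < 1) :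
    a ^ (1 - t) * b ^ t ≤ ENNReal.ofReal (1 - t) * a + ENNReal.ofReal t * b := by
  by_cases ha : a = ⊤
  · subst ha
    rw [ENNReal.mul_top (by simp; linarith)]; simp
  by_cases hb : b = ⊤
  · subst hb
    rw [ENNReal.mul_top (by simp; linarith)]; simp
  lift a to NNReal using ha
  lift b to NNReal using hb
  have := Real.geom_mean_le_arith_mean2_weighted (sub_pos.2 t1).le t0.le a.2 b.2 (by ring)
  have h2 := ENNReal.ofReal_le_ofReal this
  rw [ENNReal.ofReal_add (by have := a.2; nlinarith [mul_nonneg (sub_pos.2 t1).le a.2]) (mul_nonneg t0.le b.2), ENNReal.ofReal_mul (sub_pos.2 t1).le,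
    ENNReal.ofReal_mul t0.le, ENNReal.ofReal_mul (by exact Real.rpow_nonneg a.2 _), ← ENNReal.ofReal_rpow_of_nonneg a.2 (sub_pos.2 t1).le,
    ← ENNReal.ofReal_rpow_of_nonneg b.2 t0.le] at h2
  simpa using h2

lemma pl1_bdd {f g h : ℝ → ℝ≥0∞} (hf : Measurable f) (hg : Measurable g) (hh : Measurable h)
    {M : ℝ≥0∞} (hM : M ≠ ⊤) (fM : ∀ x, f x ≤ M) (gM : ∀ x, g x ≤ M)
    {t : ℝ} (t0 : 0 < t) (t1 : t < 1)
    (H : ∀ x y, f x ^ (1 - t) * g y ^ t ≤ h ((1 - t) * x + t * y)) :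
    (∫⁻ x, f x) ^ (1 - t) * (∫⁻ x, g x) ^ t ≤ ∫⁻ x, h x := by
  have u0 : 0 < 1 - t := sub_pos.2 t1
  set F := ⨆ x, f x with hF
  set G := ⨆ x, g x with hG
  have FM : F ≠ ⊤ := ne_top_of_le_ne_top hM (iSup_le fM)
  have GM : G ≠ ⊤ := ne_top_of_le_ne_top hM (iSup_le gM)
  by_cases F0 : F = 0
  · have : ∀ x, f x = 0 := by simpa using iSup_eq_bot.1 F0
    simp [this, u0]
  by_cases G0 : G = 0
  · have : ∀ x, g x = 0 := by simpa using iSup_eq_bot.1 G0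
    simp [this, t0]
  set c := F ^ (1 - t) * G ^ t with hc
  have cF : F ^ (1 - t) ≠ ⊤ := ENNReal.rpow_ne_top_of_nonneg u0.le FM
  have cG : G ^ t ≠ ⊤ := ENNReal.rpow_ne_top_of_nonneg t0.le GM
  have cF0 : F ^ (1 - t) ≠ 0 := by simp [ENNReal.rpow_eq_zero_iff, F0, FM]
  have cG0 : G ^ t ≠ 0 := by simp [ENNReal.rpow_eq_zero_iff, G0, GM]
  have c0 : c ≠ 0 := mul_ne_zero cF0 cG0
  have cT : c ≠ ⊤ := ENNReal.mul_ne_top cF cG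
  have f1 : ∀ x, f x / F ≤ 1 := fun x => ENNReal.div_le_of_le_mul (by simpa using le_iSup f x)
  have g1 : ∀ x, g x / G ≤ 1 := fun x => ENNReal.div_le_of_le_mul (by simpa using le_iSup g x)
  have fT : ∀ x, f x / F ≠ ⊤ := fun x => ne_top_of_le_ne_top ENNReal.one_ne_top (f1 x)
  have gT : ∀ x, g x / G ≠ ⊤ := fun x => ne_top_of_le_ne_top ENNReal.one_ne_top (g1 x)
  have hT : ∀ x, min (h x / c) 1 ≠ ⊤ := fun x => ne_top_of_le_ne_top ENNReal.one_ne_top (min_le_right _ _)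
  have sup1 : ∀ (k : ℝ → ℝ≥0∞) (K : ℝ≥0∞), K = ⨆ x, k x → K ≠ 0 → K ≠ ⊤ → (∀ x, k x / K ≤ 1) →
      ∀ l < (1:ℝ), ∃ x, l < (k x / K).toReal := by
    intro k K hK K0 KT k1 l hl
    by_cases hl0 : l < 0
    · exact ⟨0, hl0.trans_le ENNReal.toReal_nonneg⟩
    push Not at hl0
    have : ENNReal.ofReal l * K < ⨆ x, k x := by
      rw [← hK]
      calc ENNReal.ofReal l * K < 1 * K := by
            apply ENNReal.mul_lt_mul_left K0 KT
            simpa using hl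
        _ = K := one_mul _
    obtain ⟨x, hx⟩ := lt_iSup_iff.1 this
    refine ⟨x, ?_⟩
    rw [← ENNReal.ofReal_lt_iff_lt_toReal hl0 (ne_top_of_le_ne_top ENNReal.one_ne_top (k1 x))]
    rwa [ENNReal.lt_div_iff_mul_lt (Or.inl K0) (Or.inl KT)]
  have main := pl1_norm (f := fun x => (f x / F).toReal) (g := fun x => (g x / G).toReal)
    (h := fun x => (min (h x / c) 1).toReal) (hf.div_const _).ennreal_toReal
    (hg.div_const _).ennreal_toReal ((hh.div_const _).min measurable_const).ennreal_toReal
    (fun _ => ENNReal.toReal_nonneg) (fun _ => ENNReal.toReal_nonneg) (fun _ => ENNReal.toReal_nonneg)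
    (fun x => ENNReal.toReal_le_of_le_ofReal zero_le_one (by simpa using f1 x))
    (fun x => ENNReal.toReal_le_of_le_ofReal zero_le_one (by simpa using g1 x))
    (sup1 f F hF F0 FM f1) (sup1 g G hG G0 GM g1) t0 t1 ?_
  · simp only [ENNReal.ofReal_toReal (fT _), ENNReal.ofReal_toReal (gT _), ENNReal.ofReal_toReal (hT _)] at main
    have m2 : ∫⁻ x, min (h x / c) 1 ≤ (∫⁻ x, h x) / c := by
      calc _ ≤ ∫⁻ x, h x / c := lintegral_mono fun x => min_le_left _ _
        _ = _ := by simp only [div_eq_mul_inv]; rw [lintegral_mul_const _ hh]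
    have m3 : ∫⁻ x, f x / F = (∫⁻ x, f x) / F := by
      simp only [div_eq_mul_inv]; rw [lintegral_mul_const _ hf]
    have m4 : ∫⁻ x, g x / G = (∫⁻ x, g x) / G := by
      simp only [div_eq_mul_inv]; rw [lintegral_mul_const _ hg]
    have m5 := (ennreal_amgm t0 t1).trans (main.trans m2)
    rw [m3, m4, ENNReal.div_rpow_of_nonneg _ _ u0.le, ENNReal.div_rpow_of_nonneg _ _ t0.le] at m5
    rw [ENNReal.le_div_iff_mul_le (Or.inl c0) (Or.inl cT)] at m5
    refine le_trans (le_of_eq ?_) m5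
    rw [hc, div_eq_mul_inv, div_eq_mul_inv]
    calc _ = ((∫⁻ x, f x) ^ (1 - t) * (∫⁻ x, g x) ^ t) * ((F ^ (1-t))⁻¹ * F ^ (1-t)) * ((G ^ t)⁻¹ * G ^ t) := by
          rw [ENNReal.inv_mul_cancel cF0 cF, ENNReal.inv_mul_cancel cG0 cG]; simp
      _ = _ := by ring
  · intro x y l hl hx hy
    by_cases hl0 : l < 0
    · exact hl0.trans_le ENNReal.toReal_nonneg
    push Not at hl0
    rw [← ENNReal.ofReal_lt_iff_lt_toReal hl0 (fT _)] at hx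
    rw [← ENNReal.ofReal_lt_iff_lt_toReal hl0 (gT _)] at hy
    rw [← ENNReal.ofReal_lt_iff_lt_toReal hl0 (hT _)]
    apply lt_min _ (by simpa using hl)
    have a1 : ENNReal.ofReal l = (ENNReal.ofReal l) ^ (1 - t) * (ENNReal.ofReal l) ^ t := by
      rw [← ENNReal.rpow_add_of_nonneg _ _ u0.le t0.le]; simp
    calc ENNReal.ofReal l = (ENNReal.ofReal l) ^ (1 - t) * (ENNReal.ofReal l) ^ t := a1
      _ < (f x / F) ^ (1 - t) * (g y / G) ^ t := 
          ENNReal.mul_lt_mul (ENNReal.rpow_lt_rpow hx u0) (ENNReal.rpow_lt_rpow hy t0)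
      _ = (f x ^ (1 - t) * g y ^ t) / c := by
          rw [ENNReal.div_rpow_of_nonneg _ _ u0.le, ENNReal.div_rpow_of_nonneg _ _ t0.le, hc]
          simp only [div_eq_mul_inv]
          rw [ENNReal.mul_inv (Or.inl cF0) (Or.inl cF)]; ring
      _ ≤ _ := ENNReal.div_le_div_right (H x y) _

lemma pl1 {f g h : ℝ → ℝ≥0∞} (hf : Measurable f) (hg : Measurable g) (hh : Measurable h)
    {t : ℝ} (t0 : 0 < t) (t1 : t < 1)
    (H : ∀ x y, f x ^ (1 - t) * g y ^ t ≤ h ((1 - t) * x + t * y)) :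
    (∫⁻ x, f x) ^ (1 - t) * (∫⁻ x, g x) ^ t ≤ ∫⁻ x, h x := by
  have u0 : 0 < 1 - t := sub_pos.2 t1
  by_cases F0 : ∫⁻ x, f x = 0
  · simp [F0, u0]
  by_cases G0 : ∫⁻ x, g x = 0
  · simp [G0, t0]
  have lim : ∀ k : ℝ → ℝ≥0∞, Measurable k →
      Filter.Tendsto (fun n : ℕ => ∫⁻ x, min (k x) n) Filter.atTop (𝓝 (∫⁻ x, k x)) := by
    intro k hk
    apply lintegral_tendsto_of_tendsto_of_monotone (fun n => (hk.min measurable_const).aemeasurable)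
    · refine Filter.Eventually.of_forall fun x n m hnm => min_le_min le_rfl (by exact_mod_cast hnm)
    · refine Filter.Eventually.of_forall fun x => ?_
      have := (tendsto_const_nhds (x := k x)).min ENNReal.tendsto_nat_nhds_top
      simpa using this
  have l1 := (ENNReal.continuous_rpow_const (y := 1 - t)).continuousAt.tendsto.comp (lim f hf)
  have l2 := (ENNReal.continuous_rpow_const (y := t)).continuousAt.tendsto.comp (lim g hg)
  have l3 := ENNReal.Tendsto.mul l1 (Or.inl (by simp [ENNReal.rpow_eq_zero_iff, F0, t1.le])) l2
    (Or.inl (by simp [ENNReal.rpow_eq_zero_iff, G0, t0, t0.le]))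
  refine le_of_tendsto l3 (Filter.Eventually.of_forall fun n => ?_)
  apply pl1_bdd (hf.min measurable_const) (hg.min measurable_const) hh (M := n) (by simp)
    (fun _ => min_le_right _ _) (fun _ => min_le_right _ _) t0 t1
  intro x y
  refine le_trans ?_ (H x y)
  gcongr <;> exact min_le_left _ _

theorem pl_pi (n : ℕ) : ∀ {f g h : (Fin n → ℝ) → ℝ≥0∞}, Measurable f → Measurable g → Measurable h →
    ∀ {t : ℝ}, 0 < t → t < 1 →
    (∀ x y, f x ^ (1 - t) * g y ^ t ≤ h ((1 - t) • x + t • y)) →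
    (∫⁻ x, f x) ^ (1 - t) * (∫⁻ x, g x) ^ t ≤ ∫⁻ x, h x := by
  induction n with
  | zero =>
    intro f g h hf hg hh t t0 t1 H
    have : ∀ k : (Fin 0 → ℝ) → ℝ≥0∞, ∫⁻ x, k x = k default := by
      intro k
      rw [volume_pi, Measure.pi_of_empty (x := default)]; simp
    simp only [this]
    convert H default default
  | succ n ih =>
    intro f g h hf hg hh t t0 t1 H
    have key : ∀ k : (Fin (n+1) → ℝ) → ℝ≥0∞, Measurable k →
        Measurable (fun x : ℝ => ∫⁻ y, k (Fin.cons x y)) ∧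
        ∫⁻ x, k x = ∫⁻ x : ℝ, ∫⁻ y : Fin n → ℝ, k (Fin.cons x y) := by
      intro k hk
      have mp := (volume_preserving_piFinSuccAbove (fun _ : Fin (n+1) => ℝ) 0).symm
      have hk' : Measurable fun z : ℝ × (Fin n → ℝ) => k (Fin.cons z.1 z.2) := by
        have := hk.comp mp.measurable
        convert this using 1
        ext z
        simp only [Function.comp]
        congr 1
        ext i
        refine Fin.cases ?_ (fun j => ?_) i <;> simp [MeasurableEquiv.piFinSuccAbove]
      refine ⟨hk'.lintegral_prod_right', ?_⟩
      rw [← mp.lintegral_comp hk]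
      rw [← lintegral_prod (fun z : ℝ × (Fin n → ℝ) => k (Fin.cons z.1 z.2)) hk'.aemeasurable]
      rw [Measure.volume_eq_prod]
      congr 1
      ext z
      congr 1
      ext i
      refine Fin.cases ?_ (fun j => ?_) i <;> simp [MeasurableEquiv.piFinSuccAbove]
    obtain ⟨mf, ef⟩ := key f hf
    obtain ⟨mg, eg⟩ := key g hg
    obtain ⟨mh, eh⟩ := key h hh
    rw [ef, eg, eh]
    apply pl1 mf mg mh t0 t1
    intro x y
    have mc : ∀ x : ℝ, Measurable fun y : Fin n → ℝ => (Fin.cons x y : Fin (n+1) → ℝ) := by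
      intro x
      rw [measurable_pi_iff]
      intro i
      refine Fin.cases ?_ (fun j => ?_) i
      · simp
      · simp only [Fin.cons_succ]; exact measurable_pi_apply j
    apply ih (hf.comp (mc x)) (hg.comp (mc y)) (hh.comp (mc _)) t0 t1
    intro a b
    refine (H _ _).trans (le_of_eq ?_)
    simp only [Function.comp]
    congr 1
    ext i
    refine Fin.cases ?_ (fun j => ?_) i <;> simp

theorem pl_euclid (n : ℕ) {f g h : EuclideanSpace ℝ (Fin n) → ℝ≥0∞}
    (hf : Measurable f) (hg : Measurable g) (hh : Measurable h)
    {t : ℝ} (t0 : 0 < t) (t1 : t < 1)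
    (H : ∀ x y, f x ^ (1 - t) * g y ^ t ≤ h ((1 - t) • x + t • y)) :
    (∫⁻ x, f x) ^ (1 - t) * (∫⁻ x, g x) ^ t ≤ ∫⁻ x, h x := by
  have mp := (EuclideanSpace.volume_preserving_symm_measurableEquiv_toLp (Fin n)).symm
  rw [← mp.lintegral_comp hf, ← mp.lintegral_comp hg, ← mp.lintegral_comp hh]
  apply pl_pi n (hf.comp mp.measurable) (hg.comp mp.measurable) (hh.comp mp.measurable) t0 t1
  intro x y
  exact H _ _

theorem isodiametric (n : ℕ) (Ω : Set (EuclideanSpace ℝ (Fin n))) (hΩo : IsOpen Ω)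
    (hΩb : Bornology.IsBounded Ω) :
    volume Ω ≤ volume (closedBall (0 : EuclideanSpace ℝ (Fin n)) (diam Ω / 2)) := by
  have m1 : MeasurableSet Ω := hΩo.measurableSet
  have m2 : MeasurableSet (-Ω) := m1.neg
  have := pl_euclid n (f := Ω.indicator 1) (g := (-Ω).indicator 1)
    (h := (closedBall (0 : EuclideanSpace ℝ (Fin n)) (diam Ω / 2)).indicator 1)
    (measurable_one.indicator m1) (measurable_one.indicator m2)
    (measurable_one.indicator measurableSet_closedBall) (t := 1/2) (by norm_num) (by norm_num) ?_
  · rw [lintegral_indicator_one m1, lintegral_indicator_one m2,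
      lintegral_indicator_one measurableSet_closedBall, Measure.measure_neg] at this
    rw [← ENNReal.rpow_add_of_nonneg _ _ (by norm_num) (by norm_num)] at this
    norm_num at this
    exact this
  · intro x y
    by_cases hx : x ∈ Ω
    · by_cases hy : y ∈ -Ω
      · have : (1 - 1/2 : ℝ) • x + (1/2 : ℝ) • y ∈ closedBall (0 : EuclideanSpace ℝ (Fin n)) (diam Ω / 2) := by
          rw [mem_closedBall_zero_iff]
          have e : (1 - 1/2 : ℝ) • x + (1/2 : ℝ) • y = (1/2 : ℝ) • (x - (-y)) := by module
          rw [e, norm_smul, ← dist_eq_norm]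
          have := dist_le_diam_of_mem hΩb hx hy
          norm_num; linarith
        rw [indicator_of_mem this]
        simp [indicator_of_mem hx, indicator_of_mem hy]
      · simp [indicator_of_notMem hy]
    · rw [indicator_of_notMem hx]; norm_num

lemma exists_rot (n : ℕ) (e : EuclideanSpace ℝ (Fin (n+1))) (he : ‖e‖ = 1) :
    ∃ U : EuclideanSpace ℝ (Fin (n+1)) ≃ₗᵢ[ℝ] EuclideanSpace ℝ (Fin (n+1)),
      ∀ x, inner ℝ e x = (U x) 0 := by
  have ho : Orthonormal ℝ (({0} : Set (Fin (n+1))).domRestrict (fun _ => e)) := by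
    constructor
    · intro i; exact he
    · intro i j hij
      exact absurd (Subsingleton.elim i j) hij
  obtain ⟨b, hb⟩ := ho.exists_orthonormalBasis_extension_of_card_eq (by simp)
  refine ⟨b.repr, fun x => ?_⟩
  rw [b.repr_apply_apply, hb 0 (by simp)]

theorem marginal (n : ℕ) (K : Set (EuclideanSpace ℝ (Fin (n+1)))) (hKo : IsOpen K)
    (hKb : Bornology.IsBounded K) (hKc : Convex ℝ K) (e : EuclideanSpace ℝ (Fin (n+1))) (he : ‖e‖ = 1) :
    ∃ (h : ℝ → ℝ) (M : ℝ), Measurable h ∧ (∀ t, 0 ≤ h t) ∧ (∀ t, h t ≤ M) ∧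
      (∀ x y t, 0 < t → t < 1 → h x ^ (1 - t) * h y ^ t ≤ h ((1 - t) * x + t * y)) ∧
      (∀ t, h t ≠ 0 → ∃ x ∈ K, inner ℝ e x = t) ∧
      (∀ φ : ℝ → ℝ, Continuous φ → ∫ x in K, φ (inner ℝ e x) = ∫ t, φ t * h t) := by
  obtain ⟨U, hU⟩ := exists_rot n e he
  obtain ⟨R, hR⟩ := hKb.exists_norm_le
  let Ψ : ℝ × (Fin n → ℝ) → EuclideanSpace ℝ (Fin (n+1)) := fun z => U.symm (WithLp.toLp 2 (Fin.cons z.1 z.2))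
  have mpΨ : MeasurePreserving Ψ volume volume := by
    have m1 := (volume_preserving_piFinSuccAbove (fun _ : Fin (n+1) => ℝ) 0).symm
    have m2 := (EuclideanSpace.volume_preserving_symm_measurableEquiv_toLp (Fin (n+1))).symm
    have m3 := U.symm.measurePreserving
    have := m3.comp (m2.comp m1)
    have e : Ψ = U.symm ∘ (MeasurableEquiv.toLp 2 (Fin (n+1) → ℝ)) ∘ (MeasurableEquiv.piFinSuccAbove (fun _ : Fin (n+1) => ℝ) 0).symm := by
      ext z : 1
      simp only [Ψ, Function.comp]
      congr 1
      ext i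
      refine Fin.cases ?_ (fun j => ?_) i <;> simp [MeasurableEquiv.piFinSuccAbove]
    rw [e]
    exact this
  have embΨ : MeasurableEmbedding Ψ := by
    have : Ψ = U.symm ∘ (MeasurableEquiv.toLp 2 (Fin (n+1) → ℝ)) ∘ (MeasurableEquiv.piFinSuccAbove (fun _ : Fin (n+1) => ℝ) 0).symm := by
      ext z : 1
      simp only [Ψ, Function.comp]
      congr 1
      ext i
      refine Fin.cases ?_ (fun j => ?_) i <;> simp [MeasurableEquiv.piFinSuccAbove]
    rw [this]
    exact (U.symm.toHomeomorph.measurableEmbedding).comp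
      ((MeasurableEquiv.measurableEmbedding _).comp (MeasurableEquiv.measurableEmbedding _))
  have innerΨ : ∀ z, inner ℝ e (Ψ z) = z.1 := by
    intro z; rw [hU]; simp [Ψ]
  have coordΨ : ∀ z i, |z.2 i| ≤ ‖Ψ z‖ := by
    intro z i
    simp only [Ψ, LinearIsometryEquiv.norm_map]
    have := PiLp.norm_apply_le (p := 2) (WithLp.toLp 2 (Fin.cons z.1 z.2 : Fin (n+1) → ℝ)) i.succ
    simpa using this
  have mK := hKo.measurableSet
  have mS : MeasurableSet (Ψ ⁻¹' K) := mpΨ.measurable mK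
  let S : ℝ → Set (Fin n → ℝ) := fun t => {y | Ψ (t, y) ∈ K}
  have mSt : ∀ t, MeasurableSet (S t) := fun t => measurable_prodMk_left mS
  have Ssub : ∀ t, S t ⊆ closedBall 0 (max R 0) := by
    intro t y hy
    rw [mem_closedBall_zero_iff, pi_norm_le_iff_of_nonneg (le_max_right _ _)]
    intro i
    exact (coordΨ (t, y) i).trans ((hR _ hy).trans (le_max_left _ _))
  have fin : volume (closedBall (0 : Fin n → ℝ) (max R 0)) ≠ ⊤ := (isCompact_closedBall _ _).measure_lt_top.ne
  have Sfin : ∀ t, volume (S t) ≠ ⊤ := fun t => ne_top_of_le_ne_top fin (measure_mono (Ssub t))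
  refine ⟨fun t => (volume (S t)).toReal, (volume (closedBall (0 : Fin n → ℝ) (max R 0))).toReal,
    (measurable_measure_prodMk_left mS).ennreal_toReal, fun _ => ENNReal.toReal_nonneg,
    fun t => ENNReal.toReal_mono fin (measure_mono (Ssub t)), ?_, ?_, ?_⟩
  · intro x y t t0 t1
    have := pl_pi n (f := (S x).indicator 1) (g := (S y).indicator 1)
      (h := (S ((1-t)*x+t*y)).indicator 1) (measurable_one.indicator (mSt _)) (measurable_one.indicator (mSt _))
      (measurable_one.indicator (mSt _)) t0 t1 ?_
    · rw [lintegral_indicator_one (mSt _), lintegral_indicator_one (mSt _), lintegral_indicator_one (mSt _)] at this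
      have := ENNReal.toReal_mono (Sfin _) this
      rwa [ENNReal.toReal_mul, ← ENNReal.toReal_rpow, ← ENNReal.toReal_rpow] at this
    · intro a b
      by_cases ha : a ∈ S x
      · by_cases hb : b ∈ S y
        · have : (1 - t) • a + t • b ∈ S ((1-t)*x+t*y) := by
            have h1 := hKc ha hb (sub_pos.2 t1).le t0.le (by ring)
            have e1 : Ψ ((1-t)*x+t*y, (1 - t) • a + t • b) = (1 - t) • Ψ (x, a) + t • Ψ (y, b) := by
              simp only [Ψ, ← map_smul, ← map_add]
              congr 1
              ext i
              refine Fin.cases ?_ (fun j => ?_) i <;> simp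
            rw [← e1] at h1
            exact h1
          rw [indicator_of_mem this]
          simp [indicator_of_mem ha, indicator_of_mem hb]
        · simp [indicator_of_notMem hb, t0]
      · rw [indicator_of_notMem ha]; simp [t1]
  · intro t ht
    have : (S t).Nonempty := by
      by_contra hc
      rw [not_nonempty_iff_eq_empty] at hc
      simp [hc] at ht
    obtain ⟨y, hy⟩ := this
    exact ⟨_, hy, innerΨ _⟩
  · intro φ hφ
    have int1 : IntegrableOn (fun x => φ (inner ℝ e x)) K := by
      have : IntegrableOn (fun x => φ (inner ℝ e x)) (closure K) :=
        ContinuousOn.integrableOn_compact hKb.isCompact_closure (by fun_prop)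
      exact this.mono_set subset_closure
    rw [← mpΨ.setIntegral_preimage_emb embΨ]
    simp only [innerΨ]
    rw [← integral_indicator mS, Measure.volume_eq_prod, integral_prod]
    · congr 1
      ext t
      have : ∀ y, (Ψ ⁻¹' K).indicator (fun z : ℝ × (Fin n → ℝ) => φ z.1) (t, y) = (S t).indicator (fun _ => φ t) y := by
        intro y; rfl
      simp only [this]
      rw [integral_indicator (mSt t)]
      simp [measureReal_def, mul_comm]
    · rw [← Measure.volume_eq_prod, integrable_indicator_iff mS]
      have := (mpΨ.integrableOn_comp_preimage embΨ (f := fun x => φ (inner ℝ e x)) (s := K)).2 int1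
      have e1 : (fun x => φ (inner ℝ e x)) ∘ Ψ = fun z => φ z.1 := by
        funext z
        simp only [Function.comp, innerΨ]
      rw [e1] at this
      exact this

lemma J_lint {a b l : ℝ} (ha : 1 < a) (hb : 0 < b) (hl : 0 < l) :
    ∫⁻ x in Ioi (0:ℝ), ENNReal.ofReal (1 / (l + b * x ^ a)) =
      ENNReal.ofReal (Real.Gamma (1 / a + 1) * b ^ (-1 / a) * ((1 / l) ^ (1 - 1 / a) * Real.Gamma (1 - 1 / a))) := by
  have a0 : 0 < a := by linarith
  have inva : 0 < 1 - 1 / a := by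
    rw [sub_pos, div_lt_one a0]; exact ha
  have h1 : ∀ x ∈ Ioi (0:ℝ), ENNReal.ofReal (1 / (l + b * x ^ a)) =
      ∫⁻ u in Ioi (0:ℝ), ENNReal.ofReal (Real.exp (-(l + b * x ^ a) * u)) := by
    intro x hx
    have c0 : 0 < l + b * x ^ a := by have := Real.rpow_pos_of_pos hx a; positivity
    have e := integral_exp_mul_Ioi (a := -(l + b * x ^ a)) (by linarith) 0
    have i := integrableOn_exp_mul_Ioi (a := -(l + b * x ^ a)) (by linarith) 0
    rw [← ofReal_integral_eq_lintegral_ofReal i (Filter.Eventually.of_forall fun u => (Real.exp_pos _).le), e,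
      mul_zero, Real.exp_zero, neg_div_neg_eq]
  rw [setLIntegral_congr_fun measurableSet_Ioi h1, lintegral_lintegral_swap]
  swap
  · apply Measurable.aemeasurable
    simp only [Function.uncurry_def]
    fun_prop
  have h2 : ∀ u ∈ Ioi (0:ℝ), ∫⁻ x in Ioi (0:ℝ), ENNReal.ofReal (Real.exp (-(l + b * x ^ a) * u)) =
      ENNReal.ofReal (Real.Gamma (1 / a + 1) * b ^ (-1 / a)) *
        ENNReal.ofReal (u ^ ((1 - 1 / a) - 1) * Real.exp (-(l * u))) := by
    intro u hu
    have hu' : 0 < u := hu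
    have e := integral_exp_neg_mul_rpow a0 (mul_pos hb hu')
    have G0 := Real.Gamma_pos_of_pos (show 0 < 1 / a + 1 by positivity)
    have i : IntegrableOn (fun x : ℝ => Real.exp (-(b * u) * x ^ a)) (Ioi 0) := by
      by_contra hc
      rw [integral_undef hc] at e
      have : 0 < (b * u) ^ (-1 / a) * Real.Gamma (1 / a + 1) := by positivity
      linarith
    have : ∀ x, ENNReal.ofReal (Real.exp (-(l + b * x ^ a) * u)) =
        ENNReal.ofReal (Real.exp (-(l * u))) * ENNReal.ofReal (Real.exp (-(b * u) * x ^ a)) := by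
      intro x
      rw [← ENNReal.ofReal_mul (Real.exp_pos _).le, ← Real.exp_add]
      congr 2; ring
    simp_rw [this]
    rw [lintegral_const_mul _ (by fun_prop), ← ofReal_integral_eq_lintegral_ofReal i (Filter.Eventually.of_forall fun u => (Real.exp_pos _).le), e,
      ← ENNReal.ofReal_mul (Real.exp_pos _).le, ← ENNReal.ofReal_mul (by positivity)]
    congr 1
    rw [Real.mul_rpow hb.le hu'.le, show 1 - 1 / a - 1 = -1 / a by ring]
    ring
  rw [setLIntegral_congr_fun measurableSet_Ioi h2, lintegral_const_mul _ (by fun_prop)]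
  have e := Real.integral_rpow_mul_exp_neg_mul_Ioi inva hl
  have G1 := Real.Gamma_pos_of_pos inva
  have G0 := Real.Gamma_pos_of_pos (show 0 < 1 / a + 1 by positivity)
  have i : IntegrableOn (fun x : ℝ => x ^ ((1 - 1 / a) - 1) * Real.exp (-(l * x))) (Ioi 0) := by
    by_contra hc
    rw [integral_undef hc] at e
    have : 0 < (1 / l) ^ (1 - 1 / a) * Real.Gamma (1 - 1 / a) := by positivity
    linarith
  rw [← ofReal_integral_eq_lintegral_ofReal i, e, ← ENNReal.ofReal_mul (by positivity)]
  filter_upwards [ae_restrict_mem measurableSet_Ioi] with x hx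
  have := Real.rpow_nonneg (le_of_lt (show (0:ℝ) < x from hx)) ((1 - 1 / a) - 1)
  simp only [Pi.zero_apply]
  positivity

lemma J_const {p l : ℝ} (hp : 1 < p) (hl : 0 < l) :
    Real.Gamma (1 / (p / (p-1)) + 1) * (p-1) ^ (-1 / (p / (p-1))) *
      ((1 / l) ^ (1 - 1 / (p / (p-1))) * Real.Gamma (1 - 1 / (p / (p-1)))) = l ^ (-1 / p) * piP p / 2 := by
  have p0 : 0 < p := by linarith
  have p1 : 0 < p - 1 := by linarith
  have e1 : 1 / (p / (p-1)) = 1 - 1 / p := by field_simp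
  have pos : 0 < 1 - 1 / p := by rw [← e1]; positivity
  have e2 : (-1:ℝ) / (p / (p-1)) = 1 / p - 1 := by field_simp; ring
  rw [e1, e2, Real.Gamma_add_one pos.ne']
  have e3 : 1 - (1 - 1 / p) = 1 / p := by ring
  rw [e3]
  have g := Real.Gamma_mul_Gamma_one_sub (1 / p)
  have e4 : (1 / l) ^ (1 / p) = l ^ (-1 / p) := by
    rw [one_div, Real.inv_rpow hl.le, neg_div, Real.rpow_neg hl.le]
  have e5 : (p - 1) ^ (1 / p - 1) = (p-1) ^ (1/p) / (p - 1) := Real.rpow_sub_one p1.ne' _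
  rw [e4, e5, piP]
  calc _ = l ^ (-1/p) * ((p-1)^(1/p)) * ((1 - 1/p) / (p-1)) * (Real.Gamma (1/p) * Real.Gamma (1 - 1/p)) := by ring
    _ = _ := by
      rw [g, show (1 - 1/p) / (p-1) = 1 / p by field_simp, show π * (1/p) = π / p by ring]
      ring

lemma exists_R {p l L : ℝ} (hp : 1 < p) (hl : 0 < l) (hL : L < l ^ (-1 / p) * piP p) :
    ∃ R, 0 < R ∧ L / 2 ≤ ∫ x in (0:ℝ)..R, 1 / (l + (p - 1) * |x| ^ (p / (p - 1))) := by
  have p1 : 0 < p - 1 := by linarith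
  have ha : 1 < p / (p-1) := by rw [lt_div_iff₀ p1]; linarith
  have J := J_lint ha p1 hl
  rw [J_const hp hl] at J
  have nn : ∀ x : ℝ, 0 ≤ 1 / (l + (p - 1) * |x| ^ (p / (p - 1))) := fun x => by positivity
  have J' : ∫⁻ x in Ioi (0:ℝ), ENNReal.ofReal (1 / (l + (p - 1) * |x| ^ (p / (p - 1)))) = ENNReal.ofReal (l ^ (-1 / p) * piP p / 2) := by
    rw [← J]
    apply setLIntegral_congr_fun measurableSet_Ioi
    intro x hx
    simp only [abs_of_pos (show (0:ℝ) < x from hx)]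
  have mm : Measurable fun x : ℝ => 1 / (l + (p - 1) * |x| ^ (p / (p - 1))) := by fun_prop
  have i : IntegrableOn (fun x : ℝ => 1 / (l + (p - 1) * |x| ^ (p / (p - 1)))) (Ioi 0) := by
    refine ⟨mm.aestronglyMeasurable, ?_⟩
    rw [hasFiniteIntegral_iff_ofReal (Filter.Eventually.of_forall nn), J']
    exact ENNReal.ofReal_lt_top
  have pip : 0 ≤ piP p := by
    rw [piP]
    have : 0 < Real.sin (π / p) := Real.sin_pos_of_pos_of_lt_pi (by positivity) (by rw [div_lt_iff₀ (by linarith)]; nlinarith [Real.pi_pos])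
    have := Real.pi_pos
    positivity
  have e : ∫ x in Ioi (0:ℝ), 1 / (l + (p - 1) * |x| ^ (p / (p - 1))) = l ^ (-1 / p) * piP p / 2 := by
    rw [integral_eq_lintegral_of_nonneg_ae (Filter.Eventually.of_forall nn) mm.aestronglyMeasurable, J',
      ENNReal.toReal_ofReal (by positivity)]
  have t := intervalIntegral_tendsto_integral_Ioi 0 i Filter.tendsto_id
  rw [e] at t
  have ev := t.eventually (lt_mem_nhds (show L / 2 < l ^ (-1 / p) * piP p / 2 by linarith))
  obtain ⟨R, h1, h2⟩ := (ev.and (Filter.eventually_gt_atTop 0)).exists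
  exact ⟨R, h2, h1.le⟩

/-- Riccati supersolution on an interval of length `ℓ`. -/
def RicGood (p l s ℓ : ℝ) : Prop :=
  ∃ ψ ψ' : ℝ → ℝ, (∀ t ∈ Icc 0 ℓ, 0 ≤ ψ t ∧ HasDerivAt ψ (ψ' t) t ∧
    l ≤ s * ψ t + ψ' t - (p - 1) * (ψ t) ^ (p / (p - 1))) ∧ ContinuousOn ψ' (Icc 0 ℓ)

lemma young_pt {p : ℝ} (hp : 1 < p) (a b z : ℝ) (hz : 0 ≤ z) :
    -(z * (p * |b| ^ (p - 2) * b * a)) ≤ |a| ^ p + (p - 1) * z ^ (p / (p - 1)) * |b| ^ p := by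
  have p1 : 0 < p - 1 := by linarith
  have hc : p.HolderConjugate (p / (p - 1)) := Real.HolderConjugate.conjExponent hp
  have y := Real.young_inequality_of_nonneg (abs_nonneg a) (mul_nonneg hz (Real.rpow_nonneg (abs_nonneg b) (p - 1))) hc
  have e1 : (z * |b| ^ (p - 1)) ^ (p / (p - 1)) = z ^ (p / (p - 1)) * |b| ^ p := by
    rw [Real.mul_rpow hz (Real.rpow_nonneg (abs_nonneg b) _), ← Real.rpow_mul (abs_nonneg b)]
    congr 2; field_simp
  rw [e1] at y
  have e2 : |a| * (z * |b| ^ (p - 1)) * p ≤ |a| ^ p + (p - 1) * z ^ (p / (p - 1)) * |b| ^ p := by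
    calc _ ≤ (|a| ^ p / p + z ^ (p / (p - 1)) * |b| ^ p / (p / (p - 1))) * p := by
          apply mul_le_mul_of_nonneg_right y (by linarith)
      _ = _ := by field_simp
  have e3 : |b| ^ (p - 2) * |b| = |b| ^ (p - 1) := by
    by_cases hb : b = 0
    · subst hb; simp [Real.zero_rpow p1.ne']
    · rw [← Real.rpow_add_one (abs_pos.2 hb).ne']; congr 1; ring
  refine le_trans (le_trans (le_abs_self _) (le_of_eq ?_)) e2
  rw [abs_neg, abs_mul, abs_mul, abs_mul, abs_mul, abs_of_nonneg hz, abs_of_pos (by linarith : 0 < p),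
    abs_of_nonneg (Real.rpow_nonneg (abs_nonneg b) _), ← e3]
  ring

lemma cont_abs_rpow {p : ℝ} (hp : 1 < p) {w : ℝ → ℝ} (hw : Continuous w) :
    Continuous fun t => |w t| ^ p :=
  hw.abs.rpow_const fun _ => Or.inr (by linarith)

lemma tail_nonneg {p l s α m : ℝ} (hp : 1 < p) (hg : RicGood p l s (m - α))
    {w w' : ℝ → ℝ} (hw : ∀ t, HasDerivAt w (w' t) t) (hw' : Continuous w') (wm : w m = 0)
    {a : ℝ} (ha : α ≤ a) (ham : a ≤ m) :
    0 ≤ ∫ t in a..m, Real.exp (s * t) * (|w' t| ^ p - l * |w t| ^ p) := by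
  obtain ⟨ψ, ψ', hψ, hψ'⟩ := hg
  have wc : Continuous w := continuous_iff_continuousAt.2 fun t => (hw t).continuousAt
  let Θ : ℝ → ℝ := fun t => Real.exp (s * t) * (ψ (t - α) * |w t| ^ p)
  let Θ' : ℝ → ℝ := fun t => Real.exp (s * t) * s * (ψ (t - α) * |w t| ^ p) +
    Real.exp (s * t) * (ψ' (t - α) * |w t| ^ p + ψ (t - α) * (p * |w t| ^ (p - 2) * w t * w' t))
  have mem : ∀ t ∈ uIcc a m, t - α ∈ Icc 0 (m - α) := by
    intro t ht
    rw [uIcc_of_le ham] at ht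
    exact ⟨by linarith [ht.1], by linarith [ht.2]⟩
  have d : ∀ t ∈ uIcc a m, HasDerivAt Θ (Θ' t) t := by
    intro t ht
    have h1 : HasDerivAt (fun t => Real.exp (s * t)) (Real.exp (s * t) * s) t := by
      simpa using ((hasDerivAt_id t).const_mul s).exp
    have h2 : HasDerivAt (fun t => ψ (t - α)) (ψ' (t - α)) t := by
      have := (hψ _ (mem t ht)).2.1.comp t ((hasDerivAt_id t).sub_const α)
      simpa [Function.comp_def] using this
    have h3 : HasDerivAt (fun t => |w t| ^ p) (p * |w t| ^ (p - 2) * w t * w' t) t :=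
      (hasDerivAt_abs_rpow (w t) hp).comp t (hw t)
    exact h1.mul (h2.mul h3)
  have c1 : ContinuousOn (fun t => ψ (t - α)) (uIcc a m) := fun t ht =>
    ((hψ _ (mem t ht)).2.1.continuousAt.comp (f := fun t => t - α) (by fun_prop)).continuousWithinAt
  have c2 : ContinuousOn (fun t => ψ' (t - α)) (uIcc a m) :=
    hψ'.comp (by fun_prop) mem
  have c3 : Continuous fun t => |w t| ^ (p - 2) * w t := by
    have : (fun x : ℝ => |x| ^ (p - 2) * x) = fun x => (1 / p) * deriv (fun x : ℝ => |x| ^ p) x := by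
      funext x; rw [(hasDerivAt_abs_rpow x hp).deriv]; field_simp
    have c : Continuous (fun x : ℝ => |x| ^ (p - 2) * x) := by
      rw [this]
      have := (contDiff_norm_rpow (E := ℝ) hp).continuous_deriv le_rfl
      simp only [Real.norm_eq_abs] at this
      exact continuous_const.mul this
    exact c.comp wc
  have c4 := cont_abs_rpow hp wc
  have c5 : ContinuousOn Θ' (uIcc a m) := by
    have c3' : Continuous fun t => p * |w t| ^ (p - 2) * w t * w' t := by
      have : (fun t => p * |w t| ^ (p - 2) * w t * w' t) = fun t => p * (|w t| ^ (p - 2) * w t) * w' t := by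
        funext t; ring
      rw [this]; exact (continuous_const.mul c3).mul hw'
    have ce : Continuous fun t => Real.exp (s * t) := by fun_prop
    exact ((ce.mul continuous_const).continuousOn.mul (c1.mul c4.continuousOn)).add
      (ce.continuousOn.mul ((c2.mul c4.continuousOn).add (c1.mul c3'.continuousOn)))
  have ftc := intervalIntegral.integral_eq_sub_of_hasDerivAt d c5.intervalIntegrable
  have Θm : Θ m = 0 := by simp [Θ, wm, Real.zero_rpow (by linarith : p ≠ 0)]
  have Θa : 0 ≤ Θ a := by
    have := (hψ _ (mem a left_mem_uIcc)).1
    positivity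
  have cD : Continuous fun t => Real.exp (s * t) * (|w' t| ^ p - l * |w t| ^ p) := by
    have := cont_abs_rpow hp hw'
    fun_prop
  have le : ∫ t in a..m, - Θ' t ≤ ∫ t in a..m, Real.exp (s * t) * (|w' t| ^ p - l * |w t| ^ p) := by
    apply intervalIntegral.integral_mono_on ham c5.neg.intervalIntegrable cD.continuousOn.intervalIntegrable
    intro t ht
    rw [← uIcc_of_le ham] at ht
    obtain ⟨h1, -, h3⟩ := hψ _ (mem t ht)
    have y := young_pt hp (w' t) (w t) _ h1
    have e0 := Real.exp_pos (s * t)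
    have n0 := Real.rpow_nonneg (abs_nonneg (w t)) p
    have h4 := mul_le_mul_of_nonneg_right h3 n0
    have : -(s * (ψ (t - α) * |w t| ^ p) + (ψ' (t - α) * |w t| ^ p + ψ (t - α) * (p * |w t| ^ (p - 2) * w t * w' t))) ≤
      |w' t| ^ p - l * |w t| ^ p := by nlinarith
    calc -Θ' t = Real.exp (s * t) * (-(s * (ψ (t - α) * |w t| ^ p) + (ψ' (t - α) * |w t| ^ p + ψ (t - α) * (p * |w t| ^ (p - 2) * w t * w' t)))) := by
          simp only [Θ']; ring
      _ ≤ _ := mul_le_mul_of_nonneg_left this e0.le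
  rw [intervalIntegral.integral_neg, ftc, Θm] at le
  linarith

lemma abel_nonneg {α m M : ℝ} {k D : ℝ → ℝ} (hk : Measurable k) (k0 : ∀ t ∈ Ioo α m, 0 ≤ k t)
    (kM : ∀ t ∈ Ioo α m, k t ≤ M) (mono : MonotoneOn k (Ioo α m)) (hD : Continuous D)
    (tail : ∀ a, α ≤ a → a ≤ m → 0 ≤ ∫ t in a..m, D t) :
    0 ≤ ∫ t in Ioo α m, k t * D t := by
  have e1 : ∀ t ∈ Ioo α m, k t * D t = ∫ u in Ioo 0 M, (if u < k t then D t else 0) := by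
    intro t ht
    have : (fun u => if u < k t then D t else 0) = (Iio (k t)).indicator (fun _ => D t) := by
      funext u; simp [indicator, mem_Iio]
    rw [this, setIntegral_indicator measurableSet_Iio]
    have : Ioo 0 M ∩ Iio (k t) = Ioo 0 (k t) := by
      ext u; constructor
      · rintro ⟨h1, h2⟩; exact ⟨h1.1, h2⟩
      · rintro ⟨h1, h2⟩; exact ⟨⟨h1, h2.trans_le (kM t ht)⟩, h2⟩
    rw [this]
    simp [measureReal_def, ENNReal.toReal_ofReal (k0 t ht)]
  rw [setIntegral_congr_fun measurableSet_Ioo e1]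
  rw [integral_integral_swap]
  · apply integral_nonneg
    intro u
    simp only [Pi.zero_apply]
    have mS : MeasurableSet {t | u < k t} := measurableSet_lt measurable_const hk
    have : (fun t => if u < k t then D t else 0) = {t | u < k t}.indicator D := by
      funext t; simp [indicator]
    rw [this, setIntegral_indicator mS]
    set S := Ioo α m ∩ {t | u < k t} with hS
    by_cases hne : S.Nonempty
    · have bdd : BddBelow S := ⟨α, fun x hx => hx.1.1.le⟩
      set a := sInf S
      have ha : α ≤ a := le_csInf hne fun x hx => hx.1.1.le
      have ham : a ≤ m := by
        obtain ⟨x, hx⟩ := hne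
        exact (csInf_le bdd hx).trans hx.1.2.le
      have s1 : Ioo a m ⊆ S := by
        intro x hx
        obtain ⟨y, hy, hyx⟩ := exists_lt_of_csInf_lt hne hx.1
        have hx' : x ∈ Ioo α m := ⟨ha.trans_lt hx.1, hx.2⟩
        exact ⟨hx', lt_of_lt_of_le hy.2 (mono hy.1 hx' hyx.le)⟩
      have s2 : S ⊆ Icc a m := fun x hx => ⟨csInf_le bdd hx, hx.1.2.le⟩
      have : S =ᵐ[volume] Ioo a m := by
        apply Filter.EventuallyLE.antisymm
        · exact (LE.le.eventuallyLE s2).trans Ioo_ae_eq_Icc.symm.le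
        · exact LE.le.eventuallyLE s1
      rw [setIntegral_congr_set this, setIntegral_congr_set Ioo_ae_eq_Ioc, ← intervalIntegral.integral_of_le ham]
      exact tail a ha ham
    · rw [not_nonempty_iff_eq_empty.1 hne]; simp
  · obtain ⟨C, hC⟩ := isCompact_Icc.exists_bound_of_continuousOn (s := Icc α m) hD.continuousOn
    have : IsFiniteMeasure ((volume.restrict (Ioo α m)).prod (volume.restrict (Ioo 0 M))) := inferInstance
    refine Integrable.of_bound (C := C) ?_ ?_
    · apply Measurable.aestronglyMeasurable
      simp only [Function.uncurry_def]
      exact Measurable.ite (measurableSet_lt measurable_snd (hk.comp measurable_fst)) (hD.measurable.comp measurable_fst) measurable_const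
    · rw [Measure.prod_restrict]
      filter_upwards [ae_restrict_mem (measurableSet_Ioo.prod measurableSet_Ioo)] with z hz
      have hz1 := hC z.1 (Ioo_subset_Icc_self hz.1)
      simp only [Function.uncurry_def]
      split_ifs
      · exact hz1
      · simpa using (norm_nonneg _).trans hz1

lemma mixed_left {p l s α m M : ℝ} (hp : 1 < p) (hg : RicGood p l s (m - α))
    {w w' : ℝ → ℝ} (hw : ∀ t, HasDerivAt w (w' t) t) (hw' : Continuous w') (wm : w m = 0)
    {h : ℝ → ℝ} (hm : Measurable h) (h0 : ∀ t, 0 ≤ h t) (hM : ∀ t, h t ≤ M)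
    (mono : MonotoneOn (fun t => Real.exp (-s * t) * h t) (Ioo α m)) :
    0 ≤ ∫ t in Ioo α m, (|w' t| ^ p - l * |w t| ^ p) * h t := by
  have wc : Continuous w := continuous_iff_continuousAt.2 fun t => (hw t).continuousAt
  obtain ⟨C, hC⟩ := isCompact_Icc.exists_bound_of_continuousOn (s := Icc α m) (f := fun t => Real.exp (-s * t)) (by fun_prop)
  have := abel_nonneg (α := α) (m := m) (M := C * M) (k := fun t => Real.exp (-s * t) * h t)
    (D := fun t => Real.exp (s * t) * (|w' t| ^ p - l * |w t| ^ p)) (by fun_prop)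
    (fun t _ => mul_nonneg (Real.exp_pos _).le (h0 t)) ?_ mono ?_
    (fun a ha ham => tail_nonneg hp hg hw hw' wm ha ham)
  · refine this.trans (le_of_eq ?_)
    congr 1
    funext t
    have : Real.exp (-s * t) * Real.exp (s * t) = 1 := by rw [← Real.exp_add]; simp
    linear_combination (h t * (|w' t| ^ p - l * |w t| ^ p)) * this
  · intro t ht
    have h1 := hC t (Ioo_subset_Icc_self ht)
    rw [Real.norm_eq_abs, abs_of_pos (Real.exp_pos _)] at h1
    exact mul_le_mul h1 (hM t) (h0 t) ((Real.exp_pos _).le.trans h1)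
  · have := cont_abs_rpow hp hw'
    have := cont_abs_rpow hp wc
    fun_prop

lemma mixed_right {p l s β m M : ℝ} (hp : 1 < p) (hg : RicGood p l (-s) (β - m))
    {w w' : ℝ → ℝ} (hw : ∀ t, HasDerivAt w (w' t) t) (hw' : Continuous w') (wm : w m = 0)
    {h : ℝ → ℝ} (hm : Measurable h) (h0 : ∀ t, 0 ≤ h t) (hM : ∀ t, h t ≤ M)
    (anti : AntitoneOn (fun t => Real.exp (-s * t) * h t) (Ioo m β)) :
    0 ≤ ∫ t in Ioo m β, (|w' t| ^ p - l * |w t| ^ p) * h t := by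
  have := mixed_left (p := p) (l := l) (s := -s) (α := -β) (m := -m) (M := M) hp
    (by convert hg using 1; ring) (w := fun t => w (-t)) (w' := fun t => - w' (-t))
    (fun t => by simpa [Function.comp_def] using (hw (-t)).comp t (hasDerivAt_neg t)) (by fun_prop) (by simpa using wm)
    (h := fun t => h (-t)) (by fun_prop) (fun t => h0 _) (fun t => hM _) ?_
  · have e : Ioo (-β) (-m) = Neg.neg ⁻¹' (Ioo m β) := by ext x; simp
    rw [e] at this
    have mp := Measure.measurePreserving_neg (volume : Measure ℝ)
    have e2 := mp.setIntegral_preimage_emb (Homeomorph.neg ℝ).measurableEmbedding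
      (fun t => (|w' t| ^ p - l * |w t| ^ p) * h t) (Ioo m β)
    rw [← e2]
    simpa only [abs_neg] using this
  · intro x hx y hy hxy
    have := anti (a := -y) (b := -x) ⟨by linarith [hy.2], by linarith [hy.1]⟩ ⟨by linarith [hx.2], by linarith [hx.1]⟩ (by linarith)
    simpa using this

/-- The denominator in the Riccati equation. -/
noncomputable def ricD (p l s x : ℝ) : ℝ := l + (p - 1) * |x| ^ (p / (p - 1)) - s * x

lemma ricD_lower {p l l' s : ℝ} (hp : 1 < p) (hl : 0 < l) (hs : |s| ≤ p * l ^ (1 / p)) (x : ℝ) :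
    l' - l ≤ ricD p l' s x := by
  have p1 : 0 < p - 1 := by linarith
  have hc : p.HolderConjugate (p / (p - 1)) := Real.HolderConjugate.conjExponent hp
  have y := Real.young_inequality_of_nonneg (Real.rpow_nonneg hl.le (1 / p)) (abs_nonneg x) hc
  rw [← Real.rpow_mul hl.le, one_div_mul_cancel (by linarith), Real.rpow_one] at y
  have y2 : p * l ^ (1 / p) * |x| ≤ l + (p - 1) * |x| ^ (p / (p - 1)) := by
    calc _ = (l ^ (1 / p) * |x|) * p := by ring
      _ ≤ (l / p + |x| ^ (p / (p - 1)) / (p / (p - 1))) * p := by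
          apply mul_le_mul_of_nonneg_right y (by linarith)
      _ = _ := by field_simp
  have : s * x ≤ p * l ^ (1 / p) * |x| := by
    calc s * x ≤ |s * x| := le_abs_self _
      _ = |s| * |x| := abs_mul _ _
      _ ≤ _ := mul_le_mul_of_nonneg_right hs (abs_nonneg x)
  unfold ricD
  linarith

lemma ricD_cont {p l : ℝ} (hp : 1 < p) : Continuous fun z : ℝ × ℝ => ricD p l z.1 z.2 := by
  unfold ricD
  have p1 : 0 < p - 1 := by linarith
  have : Continuous fun z : ℝ × ℝ => |z.2| ^ (p / (p - 1)) :=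
    (continuous_snd.abs).rpow_const fun _ => Or.inr (by positivity)
  fun_prop

lemma ric_const {p l ℓ : ℝ} (hp : 1 < p) (hl : 0 < l) : RicGood p l (p * l ^ (1 / p)) ℓ := by
  have p1 : 0 < p - 1 := by linarith
  refine ⟨fun _ => l ^ ((p - 1) / p), fun _ => 0, fun t _ => ⟨by positivity, hasDerivAt_const _ _, ?_⟩, by fun_prop⟩
  have e1 : (l ^ ((p - 1) / p)) ^ (p / (p - 1)) = l := by
    rw [← Real.rpow_mul hl.le]
    have : (p - 1) / p * (p / (p - 1)) = 1 := by field_simp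
    rw [this, Real.rpow_one]
  have e2 : l ^ (1 / p) * l ^ ((p - 1) / p) = l := by
    rw [← Real.rpow_add hl]
    have : 1 / p + (p - 1) / p = 1 := by field_simp; ring
    rw [this, Real.rpow_one]
  rw [e1, mul_assoc, e2]
  linarith

lemma ric_exists {p l l' s R ℓ : ℝ} (hp : 1 < p) (hl : 0 < l) (hll : l < l')
    (hs : |s| ≤ p * l ^ (1 / p)) (hR : 0 < R) (hℓ : ℓ ≤ ∫ x in (0:ℝ)..R, 1 / ricD p l' s x) :
    RicGood p l s ℓ := by
  have Dpos : ∀ x, 0 < ricD p l' s x := fun x => by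
    have := ricD_lower (l' := l') hp hl hs x; linarith
  have Dc : Continuous fun x => ricD p l' s x := (ricD_cont hp).comp (by fun_prop : Continuous fun x : ℝ => (s, x))
  have gc : Continuous fun x => 1 / ricD p l' s x := continuous_const.div Dc fun x => (Dpos x).ne'
  let G : ℝ → ℝ := fun y => ∫ x in (0:ℝ)..y, 1 / ricD p l' s x
  have dG : ∀ y, HasDerivAt G (1 / ricD p l' s y) y := fun y =>
    intervalIntegral.integral_hasDerivAt_right (gc.intervalIntegrable _ _)
      (gc.stronglyMeasurableAtFilter _ _) gc.continuousAt
  have Gc : Continuous G := continuous_iff_continuousAt.2 fun y => (dG y).continuousAt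
  have Gm : StrictMono G := strictMono_of_deriv_pos fun y => by
    rw [(dG y).deriv]; exact one_div_pos.2 (Dpos y)
  let ψ := Function.invFun G
  have ψG : ∀ y, ψ (G y) = y := Function.leftInverse_invFun Gm.injective
  have G0 : G 0 = 0 := by simp [G]
  -- local inverse
  have main : ∀ t ∈ Icc 0 ℓ, ∃ y, 0 ≤ y ∧ G y = t := by
    intro t ht
    have : t ∈ Icc (G 0) (G R) := ⟨by rw [G0]; exact ht.1, ht.2.trans hℓ⟩
    obtain ⟨y, hy, e⟩ := intermediate_value_Icc hR.le Gc.continuousOn this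
    exact ⟨y, hy.1, e⟩
  have dψ : ∀ t ∈ Icc 0 ℓ, HasDerivAt ψ (ricD p l' s (ψ t)) t := by
    intro t ht
    obtain ⟨y, hy, rfl⟩ := main t ht
    have nb : Ioo (G (y - 1)) (G (y + 1)) ∈ 𝓝 (G y) := Ioo_mem_nhds (Gm (by linarith)) (Gm (by linarith))
    have inv : ∀ᶠ z in 𝓝 (G y), G (ψ z) = z := by
      filter_upwards [nb] with z hz
      obtain ⟨x, -, hx⟩ := intermediate_value_Ioo (by linarith : y - 1 ≤ y + 1) Gc.continuousOn hz
      rw [← hx, ψG]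
    have cψ : ContinuousAt ψ (G y) := by
      rw [ContinuousAt, ψG, tendsto_order]
      constructor
      · intro a ha
        filter_upwards [inv, lt_mem_nhds (Gm ha)] with z h1 h2
        rw [← h1] at h2; exact Gm.lt_iff_lt.1 h2
      · intro a ha
        filter_upwards [inv, gt_mem_nhds (Gm ha)] with z h1 h2
        rw [← h1] at h2; exact Gm.lt_iff_lt.1 h2
    have := HasDerivAt.of_local_left_inverse cψ (by rw [ψG]; exact dG y) (one_div_pos.2 (Dpos y)).ne' inv
    rw [ψG]
    simpa using this
  refine ⟨ψ, fun t => ricD p l' s (ψ t), fun t ht => ⟨?_, dψ t ht, ?_⟩, ?_⟩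
  · obtain ⟨y, hy, rfl⟩ := main t ht
    rw [ψG]; exact hy
  · obtain ⟨y, hy, rfl⟩ := main t ht
    simp only [ricD, ψG, abs_of_nonneg hy]
    linarith
  · exact Dc.comp_continuousOn fun t ht => (dψ t ht).continuousAt.continuousWithinAt

lemma X_cont {p l l' R : ℝ} (hp : 1 < p) (hl : 0 < l) (hll : l < l') :
    ContinuousOn (fun s => ∫ x in (0:ℝ)..R, 1 / ricD p l' s x) (Icc (-(p * l ^ (1 / p))) (p * l ^ (1 / p))) := by
  set s1 := p * l ^ (1 / p)
  have s10 : 0 ≤ s1 := by have := Real.rpow_nonneg hl.le (1/p); positivity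
  -- use projection
  have c : Continuous fun s => ∫ x in (0:ℝ)..R, 1 / ricD p l' (projIcc (-s1) s1 (by linarith) s) x := by
    apply intervalIntegral.continuous_parametric_intervalIntegral_of_continuous'
    simp only [Function.uncurry_def]
    refine continuous_const.div ?_ ?_
    · exact (ricD_cont hp).comp (by fun_prop : Continuous fun z : ℝ × ℝ => (((projIcc (-s1) s1 (neg_le_self s10) z.1 : Icc (-s1) s1) : ℝ), z.2))
    · intro z
      have h := (projIcc (-s1) s1 (by linarith) z.1).2
      have := ricD_lower (l' := l') hp hl (abs_le.2 h) z.2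
      linarith
  refine c.continuousOn.congr ?_
  intro s hs
  simp only
  rw [projIcc_of_mem _ hs]

lemma X_sum {p l l' R s : ℝ} (hp : 1 < p) (hl : 0 < l) (hll : l < l') (hR : 0 < R)
    (hs : |s| ≤ p * l ^ (1 / p)) :
    2 * (∫ x in (0:ℝ)..R, 1 / (l' + (p - 1) * |x| ^ (p / (p - 1)))) ≤
      (∫ x in (0:ℝ)..R, 1 / ricD p l' s x) + ∫ x in (0:ℝ)..R, 1 / ricD p l' (-s) x := by
  have Dpos : ∀ s, |s| ≤ p * l ^ (1 / p) → ∀ x, 0 < ricD p l' s x := fun s hs x => by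
    have := ricD_lower (l' := l') hp hl hs x; linarith
  have Dc : ∀ s, Continuous fun x => ricD p l' s x := fun s => (ricD_cont hp).comp (by fun_prop : Continuous fun x : ℝ => (s, x))
  have gc : ∀ s, |s| ≤ p * l ^ (1 / p) → Continuous fun x => 1 / ricD p l' s x :=
    fun s hs => continuous_const.div (Dc s) fun x => (Dpos s hs x).ne'
  have hs' : |-s| ≤ p * l ^ (1 / p) := by rwa [abs_neg]
  have h0 : |(0:ℝ)| ≤ p * l ^ (1 / p) := by simp; positivity
  have e0 : ∀ x, l' + (p - 1) * |x| ^ (p / (p - 1)) = ricD p l' 0 x := fun x => by simp [ricD]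
  simp only [e0]
  rw [← intervalIntegral.integral_add ((gc s hs).intervalIntegrable _ _) ((gc _ hs').intervalIntegrable _ _),
    ← intervalIntegral.integral_const_mul]
  apply intervalIntegral.integral_mono_on hR.le
  · exact ((gc 0 h0).const_mul 2 |>.intervalIntegrable _ _)
  · exact (((gc s hs).add (gc _ hs')).intervalIntegrable _ _)
  · intro x _
    have a1 := Dpos s hs x
    have a2 := Dpos _ hs' x
    have a0 := Dpos 0 h0 x
    have e1 : ricD p l' s x = ricD p l' 0 x - s * x := by simp [ricD]
    have e2 : ricD p l' (-s) x = ricD p l' 0 x + s * x := by simp [ricD]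
    rw [e1] at a1 ⊢
    rw [e2] at a2 ⊢
    set A := ricD p l' 0 x
    rw [div_add_div _ _ a1.ne' a2.ne', mul_one_div, div_le_div_iff₀ a0 (by positivity)]
    nlinarith [sq_nonneg (s * x), a0, mul_nonneg a0.le (sq_nonneg (s*x))]

lemma unimodal {k : ℝ → ℝ} {α β : ℝ} (hab : α ≤ β)
    (hk : ∀ x y z, x ≤ y → y ≤ z → min (k x) (k z) ≤ k y) :
    ∃ m ∈ Icc α β, MonotoneOn k (Ioo α m) ∧ AntitoneOn k (Ioo m β) := by
  let S := {y | y ∈ Icc α β ∧ MonotoneOn k (Ioo α y)}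
  have aS : α ∈ S := ⟨⟨le_rfl, hab⟩, fun x hx => absurd hx.1 (not_lt.2 hx.2.le)⟩
  have bd : BddAbove S := ⟨β, fun y hy => hy.1.2⟩
  refine ⟨sSup S, ⟨le_csSup bd aS, csSup_le ⟨_, aS⟩ fun y hy => hy.1.2⟩, ?_, ?_⟩
  · intro x hx y hy hxy
    obtain ⟨z, hz, hyz⟩ := exists_lt_of_lt_csSup ⟨_, aS⟩ hy.2
    exact hz.2 ⟨hx.1, hxy.trans_lt hyz⟩ ⟨hy.1, hyz⟩ hxy
  · intro x hx y hy hxy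
    by_contra hc
    push Not at hc
    have : x ∈ S := by
      refine ⟨⟨(le_csSup bd aS).trans hx.1.le, hx.2.le⟩, ?_⟩
      intro a ha b hb hab'
      by_contra hc2
      push Not at hc2
      have h1 := hk a b y hab' (hb.2.le.trans hxy)
      have h2 : k y ≤ k b := by
        rcases min_le_iff.1 h1 with h | h
        · linarith
        · exact h
      have h3 := hk b x y hb.2.le hxy
      rcases min_le_iff.1 h3 with h | h <;> linarith
    exact absurd (le_csSup bd this) (not_le.2 hx.1)

lemma select {α β s1 : ℝ} (hab : α ≤ β) (hs1 : 0 ≤ s1) {h X : ℝ → ℝ}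
    (uni : ∀ s, ∃ m ∈ Icc α β, MonotoneOn (fun t => Real.exp (-s * t) * h t) (Ioo α m) ∧
      AntitoneOn (fun t => Real.exp (-s * t) * h t) (Ioo m β))
    (Xc : ContinuousOn X (Icc (-s1) s1)) (Xs : ∀ s ∈ Icc (-s1) s1, β - α ≤ X s + X (-s)) :
    ∃ s ∈ Icc (-s1) s1, ∃ m ∈ Icc α β, MonotoneOn (fun t => Real.exp (-s * t) * h t) (Ioo α m) ∧
      AntitoneOn (fun t => Real.exp (-s * t) * h t) (Ioo m β) ∧
      (m - α ≤ X s ∨ s = s1) ∧ (β - m ≤ X (-s) ∨ s = -s1) := by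
  let Γ : Set (ℝ × ℝ) := {z | z ∈ Icc (-s1) s1 ×ˢ Icc α β ∧
    MonotoneOn (fun t => Real.exp (-z.1 * t) * h t) (Ioo α z.2) ∧
      AntitoneOn (fun t => Real.exp (-z.1 * t) * h t) (Ioo z.2 β)}
  have Γc : IsClosed Γ := by
    apply IsSeqClosed.isClosed
    intro z z₀ hz hlim
    have l1 : Filter.Tendsto (fun n => (z n).1) Filter.atTop (𝓝 z₀.1) := (continuous_fst.tendsto _).comp hlim
    have l2 : Filter.Tendsto (fun n => (z n).2) Filter.atTop (𝓝 z₀.2) := (continuous_snd.tendsto _).comp hlim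
    have lx : ∀ x, Filter.Tendsto (fun n => Real.exp (-(z n).1 * x) * h x) Filter.atTop (𝓝 (Real.exp (-z₀.1 * x) * h x)) := by
      intro x
      exact (((Real.continuous_exp.comp (continuous_neg.mul continuous_const)).mul continuous_const).tendsto (z₀.1)).comp l1
    refine ⟨(isClosed_Icc.prod isClosed_Icc).mem_of_tendsto hlim (Filter.Eventually.of_forall fun n => (hz n).1), ?_, ?_⟩
    · intro x hx y hy hxy
      apply le_of_tendsto_of_tendsto (lx x) (lx y)
      filter_upwards [l2.eventually (lt_mem_nhds hy.2)] with n hn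
      exact (hz n).2.1 ⟨hx.1, hxy.trans_lt hn⟩ ⟨hy.1, hn⟩ hxy
    · intro x hx y hy hxy
      apply le_of_tendsto_of_tendsto (lx y) (lx x)
      filter_upwards [l2.eventually (gt_mem_nhds hx.1)] with n hn
      exact (hz n).2.2 ⟨hn, hx.2⟩ ⟨hn.trans_le hxy, hy.2⟩ hxy
  have Γk : IsCompact Γ := (isCompact_Icc.prod isCompact_Icc).of_isClosed_subset Γc fun z hz => hz.1
  let A : Set (ℝ × ℝ) := {z | z ∈ Γ ∧ (z.2 - α ≤ X z.1 ∨ z.1 = s1)}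
  let B : Set (ℝ × ℝ) := {z | z ∈ Γ ∧ (β - z.2 ≤ X (-z.1) ∨ z.1 = -s1)}
  have cX1 : ContinuousOn (fun z : ℝ × ℝ => X z.1) Γ := Xc.comp continuous_fst.continuousOn fun z hz => hz.1.1
  have cX2 : ContinuousOn (fun z : ℝ × ℝ => X (-z.1)) Γ := Xc.comp continuous_fst.neg.continuousOn fun z hz => by
    have := hz.1.1
    exact ⟨by linarith [this.2], by linarith [this.1]⟩
  have Ak : IsCompact A := by
    have e : A = (Γ ∩ {z | z.2 - α ≤ X z.1}) ∪ (Γ ∩ {z | z.1 = s1}) := by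
      ext z; simp only [A, mem_ofPred_eq, mem_union, mem_inter_iff]; tauto
    rw [e]
    refine IsCompact.union ?_ ?_
    · refine Γk.of_isClosed_subset ?_ inter_subset_left
      have : ContinuousOn (fun z : ℝ × ℝ => X z.1 - (z.2 - α)) Γ := cX1.sub (by fun_prop)
      have := this.preimage_isClosed_of_isClosed Γc isClosed_Ici (t := Ici 0)
      convert this using 1
      ext z; simp
    · exact Γk.inter_right (isClosed_eq continuous_fst continuous_const)
  have Bk : IsCompact B := by
    have e : B = (Γ ∩ {z | β - z.2 ≤ X (-z.1)}) ∪ (Γ ∩ {z | z.1 = -s1}) := by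
      ext z; simp only [B, mem_ofPred_eq, mem_union, mem_inter_iff]; tauto
    rw [e]
    refine IsCompact.union ?_ ?_
    · refine Γk.of_isClosed_subset ?_ inter_subset_left
      have : ContinuousOn (fun z : ℝ × ℝ => X (-z.1) - (β - z.2)) Γ := cX2.sub (by fun_prop)
      have := this.preimage_isClosed_of_isClosed Γc isClosed_Ici (t := Ici 0)
      convert this using 1
      ext z; simp
    · exact Γk.inter_right (isClosed_eq continuous_fst continuous_const)
  have con : IsPreconnected (Icc (-s1) s1) := isPreconnected_Icc
  rw [isPreconnected_closed_iff] at con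
  have con2 := con (Prod.fst '' A) (Prod.fst '' B) (Ak.image continuous_fst).isClosed
    (Bk.image continuous_fst).isClosed
  have con3 : (Icc (-s1) s1 ∩ (Prod.fst '' A ∩ Prod.fst '' B)).Nonempty := by
    refine con2 ?_ ?_ ?_
    · intro s hs
      obtain ⟨m, hm, mon, ant⟩ := uni s
      have hΓ : (s, m) ∈ Γ := ⟨⟨hs, hm⟩, mon, ant⟩
      by_cases c : m - α ≤ X s
      · exact Or.inl ⟨(s, m), ⟨hΓ, Or.inl c⟩, rfl⟩
      · refine Or.inr ⟨(s, m), ⟨hΓ, Or.inl ?_⟩, rfl⟩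
        have := Xs s hs
        linarith
    · obtain ⟨m, hm, mon, ant⟩ := uni s1
      have hs : s1 ∈ Icc (-s1) s1 := ⟨by linarith, le_rfl⟩
      exact ⟨s1, hs, (s1, m), ⟨⟨⟨hs, hm⟩, mon, ant⟩, Or.inr rfl⟩, rfl⟩
    · obtain ⟨m, hm, mon, ant⟩ := uni (-s1)
      have hs : -s1 ∈ Icc (-s1) s1 := ⟨le_rfl, by linarith⟩
      exact ⟨-s1, hs, (-s1, m), ⟨⟨⟨hs, hm⟩, mon, ant⟩, Or.inr rfl⟩, rfl⟩
  obtain ⟨s, hs, hsA, hsB⟩ := con3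
  obtain ⟨⟨s', m1⟩, hA, rfl⟩ := hsA
  obtain ⟨⟨s'', m2⟩, hB, e⟩ := hsB
  simp only at e hs
  subst e
  obtain ⟨⟨⟨_, hm1⟩, mon1, ant1⟩, hA2⟩ := hA
  obtain ⟨⟨⟨_, hm2⟩, mon2, ant2⟩, hB2⟩ := hB
  simp only at hm1 mon1 ant1 hA2 hm2 mon2 ant2 hB2
  refine ⟨s'', hs, ?_⟩
  by_cases c1 : s'' = s1
  · exact ⟨m2, hm2, mon2, ant2, Or.inr c1, hB2⟩
  by_cases c2 : s'' = -s1
  · exact ⟨m1, hm1, mon1, ant1, hA2, Or.inr c2⟩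
  have hA3 := hA2.resolve_right c1
  have hB3 := hB2.resolve_right c2
  by_cases c3 : β - m1 ≤ X (-s'')
  · exact ⟨m1, hm1, mon1, ant1, hA2, Or.inl c3⟩
  by_cases c4 : m2 - α ≤ X s''
  · exact ⟨m2, hm2, mon2, ant2, Or.inl c4, hB2⟩
  push Not at c3 c4
  refine ⟨X s'' + α, ⟨by linarith [hm1.1], by linarith [hm2.2]⟩,
    mon2.mono (Ioo_subset_Ioo_right (by linarith)), ant1.mono (Ioo_subset_Ioo_left (by linarith)),
    Or.inl (by linarith), Or.inl ?_⟩
  have := Xs _ hs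
  linarith

lemma logconc_quasi {h : ℝ → ℝ} (h0 : ∀ t, 0 ≤ h t)
    (lc : ∀ x y t, 0 < t → t < 1 → h x ^ (1 - t) * h y ^ t ≤ h ((1 - t) * x + t * y)) (s : ℝ) :
    ∀ x y z, x ≤ y → y ≤ z → min (Real.exp (-s * x) * h x) (Real.exp (-s * z) * h z) ≤ Real.exp (-s * y) * h y := by
  intro x y z hxy hyz
  rcases hxy.eq_or_lt with rfl | hxy
  · exact min_le_left _ _
  rcases hyz.eq_or_lt with rfl | hyz
  · exact min_le_right _ _
  set t := (y - x) / (z - x) with ht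
  have d : 0 < z - x := by linarith
  have t0 : 0 < t := div_pos (by linarith) d
  have t1 : t < 1 := by rw [ht, div_lt_one d]; linarith
  have ey : (1 - t) * x + t * z = y := by rw [ht]; field_simp; ring
  have l := lc x z t t0 t1
  rw [ey] at l
  have u0 : 0 < 1 - t := by linarith
  set a := Real.exp (-s * x) * h x with ha
  set b := Real.exp (-s * z) * h z with hb
  have a0 : 0 ≤ a := mul_nonneg (Real.exp_pos _).le (h0 _)
  have b0 : 0 ≤ b := mul_nonneg (Real.exp_pos _).le (h0 _)
  have m0 : 0 ≤ min a b := le_min a0 b0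
  calc min a b = (min a b) ^ (1 - t) * (min a b) ^ t := by
        rw [← Real.rpow_add' m0 (by norm_num)]; simp
    _ ≤ a ^ (1 - t) * b ^ t := by
        apply mul_le_mul (Real.rpow_le_rpow m0 (min_le_left _ _) u0.le) (Real.rpow_le_rpow m0 (min_le_right _ _) t0.le)
        · positivity
        · positivity
    _ = Real.exp (-s * y) * (h x ^ (1 - t) * h z ^ t) := by
        rw [ha, hb, Real.mul_rpow (Real.exp_pos _).le (h0 _), Real.mul_rpow (Real.exp_pos _).le (h0 _),
          ← Real.exp_mul, ← Real.exp_mul]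
        have : Real.exp (-s * y) = Real.exp (-s * x * (1 - t)) * Real.exp (-s * z * t) := by
          rw [← Real.exp_add, ← ey]; congr 1; ring
        rw [this]; ring
    _ ≤ _ := mul_le_mul_of_nonneg_left l (Real.exp_pos _).le

theorem needle {p L l : ℝ} (hp : 1 < p) (hL : 0 < L) (hl : 0 < l) (hll : l < (piP p / L) ^ p)
    {h : ℝ → ℝ} {M α β : ℝ} (hm : Measurable h) (h0 : ∀ t, 0 ≤ h t) (hM : ∀ t, h t ≤ M)
    (lc : ∀ x y t, 0 < t → t < 1 → h x ^ (1 - t) * h y ^ t ≤ h ((1 - t) * x + t * y))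
    (hab : α ≤ β) (hLab : β - α ≤ L) (hz : ∀ t, t ∉ Icc α β → h t = 0)
    {w w' : ℝ → ℝ} (hw : ∀ t, HasDerivAt w (w' t) t) (hw' : Continuous w') :
    ∃ m ∈ Icc α β, l * ∫ t, |w t - w m| ^ p * h t ≤ ∫ t, |w' t| ^ p * h t := by
  have p0 : 0 < p := by linarith
  obtain ⟨l', h1, h2⟩ := exists_between hll
  have l0 : 0 < l' := hl.trans h1
  have pp : 0 ≤ piP p := by
    rw [piP]
    have p1 : 0 < p - 1 := by linarith
    have : 0 < Real.sin (π / p) := Real.sin_pos_of_pos_of_lt_pi (by positivity) (by rw [div_lt_iff₀ (by linarith)]; nlinarith [Real.pi_pos])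
    have := Real.pi_pos
    positivity
  have hL' : L < l' ^ (-1 / p) * piP p := by
    have e1 : l' ^ (1 / p) < piP p / L := by
      have := Real.rpow_lt_rpow l0.le h2 (show 0 < 1 / p by positivity)
      rwa [← Real.rpow_mul (by positivity), mul_one_div_cancel p0.ne', Real.rpow_one] at this
    rw [lt_div_iff₀ hL] at e1
    have q0 := Real.rpow_pos_of_pos l0 (1/p)
    rw [neg_div, Real.rpow_neg l0.le, inv_mul_eq_div, lt_div_iff₀ q0]
    linarith
  obtain ⟨R, R0, hR⟩ := exists_R hp l0 hL'
  set s1 := p * l ^ (1 / p) with hs1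
  have s10 : 0 ≤ s1 := by have := Real.rpow_nonneg hl.le (1/p); positivity
  obtain ⟨s, hs, m, hm', mon, ant, g1, g2⟩ := select (X := fun s => ∫ x in (0:ℝ)..R, 1 / ricD p l' s x) hab s10
    (fun s => unimodal hab (logconc_quasi h0 lc s)) (X_cont hp hl h1)
    (fun s hs => by
      have := X_sum hp hl h1 R0 (abs_le.2 hs)
      linarith)
  have good1 : RicGood p l s (m - α) := by
    rcases g1 with g | g
    · exact ric_exists hp hl h1 (abs_le.2 hs) R0 g
    · rw [g]; exact ric_const hp hl
  have good2 : RicGood p l (-s) (β - m) := by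
    rcases g2 with g | g
    · exact ric_exists hp hl h1 (by rw [abs_neg]; exact abs_le.2 hs) R0 g
    · rw [g, neg_neg]; exact ric_const hp hl
  refine ⟨m, hm', ?_⟩
  have hwm : ∀ t, HasDerivAt (fun t => w t - w m) (w' t) t := fun t => (hw t).sub_const _
  have I1 := mixed_left hp good1 hwm hw' (by simp) hm h0 hM mon
  have I2 := mixed_right hp good2 hwm hw' (by simp) hm h0 hM ant
  have wc : Continuous w := continuous_iff_continuousAt.2 fun t => (hw t).continuousAt
  have ca := cont_abs_rpow hp hw'
  have cb := cont_abs_rpow hp (w := fun t => w t - w m) (by fun_prop)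
  have int : ∀ φ : ℝ → ℝ, Continuous φ → IntegrableOn (fun t => φ t * h t) (Icc α β) := by
    intro φ hφ
    have : IntegrableOn h (Icc α β) := by
      refine Measure.integrableOn_of_bounded (M := M) isCompact_Icc.measure_lt_top.ne hm.aestronglyMeasurable ?_
      exact Filter.Eventually.of_forall fun t => by rw [Real.norm_eq_abs, abs_of_nonneg (h0 t)]; exact hM t
    exact IntegrableOn.continuousOn_mul hφ.continuousOn this isCompact_Icc
  have tot : ∀ φ : ℝ → ℝ, Continuous φ → ∫ t, φ t * h t = (∫ t in Ioo α m, φ t * h t) + ∫ t in Ioo m β, φ t * h t := by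
    intro φ hφ
    have e1 : ∫ t, φ t * h t = ∫ t in Icc α β, φ t * h t := by
      rw [setIntegral_eq_integral_of_forall_compl_eq_zero]
      intro t ht; rw [hz t ht, mul_zero]
    rw [e1, setIntegral_congr_set Ioo_ae_eq_Ioc, setIntegral_congr_set (Ioo_ae_eq_Ioc (a := m)), setIntegral_congr_set Ioc_ae_eq_Icc.symm,
      ← Ioc_union_Ioc_eq_Ioc hm'.1 hm'.2, setIntegral_union (Ioc_disjoint_Ioc_of_le le_rfl) measurableSet_Ioc]
    · exact (int φ hφ).mono_set (Ioc_subset_Icc_self.trans (Icc_subset_Icc_right hm'.2))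
    · exact (int φ hφ).mono_set (Ioc_subset_Icc_self.trans (Icc_subset_Icc_left hm'.1))
  have I3 : 0 ≤ ∫ t, (|w' t| ^ p - l * |w t - w m| ^ p) * h t := by
    rw [tot _ (by fun_prop)]; exact add_nonneg I1 I2
  have intg : ∀ φ : ℝ → ℝ, Continuous φ → Integrable (fun t => φ t * h t) := by
    intro φ hφ
    rw [← integrableOn_iff_integrable_of_support_subset (s := Icc α β)]
    · exact int φ hφ
    · intro t ht
      by_contra hc
      exact ht (by simp [hz t hc])
  have e : (fun t => (|w' t| ^ p - l * |w t - w m| ^ p) * h t) = fun t => |w' t| ^ p * h t - l * (|w t - w m| ^ p * h t) := by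
    funext t; ring
  rw [e, integral_sub (intg _ ca) ((intg _ cb).const_mul l), integral_const_mul] at I3
  linarith

lemma hyper_null {N : ℕ} (i j : Fin N) (hij : i ≠ j) (a b c s : ℝ) (hcs : c ^ 2 + s ^ 2 = 1) :
    volume {x : EuclideanSpace ℝ (Fin N) | c * (x i - a) + s * (x j - b) = 0} = 0 := by
  let L : EuclideanSpace ℝ (Fin N) →ₗ[ℝ] ℝ :=
    c • (EuclideanSpace.proj i : EuclideanSpace ℝ (Fin N) →L[ℝ] ℝ).toLinearMap + s • (EuclideanSpace.proj j : EuclideanSpace ℝ (Fin N) →L[ℝ] ℝ).toLinearMap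
  have hL : ∀ x, L x = c * x i + s * x j := fun x => by simp [L]
  let x0 : EuclideanSpace ℝ (Fin N) := a • EuclideanSpace.single i 1 + b • EuclideanSpace.single j 1
  have e : {x : EuclideanSpace ℝ (Fin N) | c * (x i - a) + s * (x j - b) = 0} =
      (fun x => x + -x0) ⁻¹' (LinearMap.ker L : Set (EuclideanSpace ℝ (Fin N))) := by
    ext x
    simp only [mem_ofPred_eq, mem_preimage, SetLike.mem_coe, LinearMap.mem_ker, hL]
    simp [x0, hij, hij.symm, sub_eq_add_neg]
  rw [e, measure_preimage_add_right]
  apply Measure.addHaar_submodule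
  intro h
  have h1 : L (c • EuclideanSpace.single i 1 + s • EuclideanSpace.single j 1) = 0 := by
    rw [← LinearMap.mem_ker, h]; trivial
  rw [hL] at h1
  simp [hij, hij.symm] at h1
  nlinarith

lemma halve {N : ℕ} {K : Set (EuclideanSpace ℝ (Fin N))} (hKo : IsOpen K) (hKb : Bornology.IsBounded K)
    {f F : EuclideanSpace ℝ (Fin N) → ℝ} (hf : Continuous f) (hF : Continuous F)
    (f0 : ∫ x in K, f x = 0) (F0 : ∫ x in K, F x < 0) (i j : Fin N) (hij : i ≠ j) (a b : ℝ) :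
    ∃ c s : ℝ, c ^ 2 + s ^ 2 = 1 ∧ ∫ x in K ∩ {x | 0 < c * (x i - a) + s * (x j - b)}, f x = 0 ∧
      ∫ x in K ∩ {x | 0 < c * (x i - a) + s * (x j - b)}, F x < 0 := by
  have int : ∀ g : EuclideanSpace ℝ (Fin N) → ℝ, Continuous g → IntegrableOn g K := fun g hg =>
    (hg.continuousOn.integrableOn_compact hKb.isCompact_closure).mono_set subset_closure
  let H : ℝ → ℝ → Set (EuclideanSpace ℝ (Fin N)) := fun c s => {x | 0 < c * (x i - a) + s * (x j - b)}
  have Ho : ∀ c s, IsOpen (H c s) := fun c s => isOpen_lt continuous_const (by fun_prop)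
  have split : ∀ c s, c ^ 2 + s ^ 2 = 1 → ∀ g : EuclideanSpace ℝ (Fin N) → ℝ, Continuous g →
      (∫ x in K ∩ H c s, g x) + ∫ x in K ∩ H (-c) (-s), g x = ∫ x in K, g x := by
    intro c s hcs g hg
    rw [← setIntegral_union]
    · apply setIntegral_congr_set
      have h0 := hyper_null i j hij a b c s hcs
      have : ∀ᵐ x : EuclideanSpace ℝ (Fin N), ¬ (c * (x i - a) + s * (x j - b) = 0) := by
        rw [ae_iff]; simpa using h0
      filter_upwards [this] with x hx
      apply propext
      change (x ∈ K ∩ H c s ∪ K ∩ H (-c) (-s)) ↔ x ∈ K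
      simp only [H, mem_union, mem_inter_iff, mem_ofPred_eq]
      constructor
      · rintro (h | h) <;> exact h.1
      · intro h
        rcases lt_or_gt_of_ne hx with h' | h'
        · exact Or.inr ⟨h, by linarith⟩
        · exact Or.inl ⟨h, h'⟩
    · rw [Set.disjoint_left]
      rintro x ⟨_, h1⟩ ⟨_, h2⟩
      simp only [H, mem_ofPred_eq] at h1 h2
      linarith
    · exact (hKo.inter (Ho _ _)).measurableSet
    · exact (int g hg).mono_set inter_subset_left
    · exact (int g hg).mono_set inter_subset_left
  let φ : ℝ → ℝ := fun θ => ∫ x in K, (H (cos θ) (sin θ)).indicator f x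
  have φe : ∀ θ, φ θ = ∫ x in K ∩ H (cos θ) (sin θ), f x := fun θ => by
    simp only [φ]
    rw [setIntegral_indicator (Ho _ _).measurableSet]
  have φc : Continuous φ := by
    rw [continuous_iff_continuousAt]
    intro θ0
    apply continuousAt_of_dominated (bound := fun x => |f x|)
    · exact Filter.Eventually.of_forall fun θ => (hf.measurable.indicator (Ho _ _).measurableSet).aestronglyMeasurable
    · refine Filter.Eventually.of_forall fun θ => Filter.Eventually.of_forall fun x => ?_
      exact norm_indicator_le_norm_self _ _
    · exact int _ hf.abs
    · have h0 := hyper_null i j hij a b (cos θ0) (sin θ0) (cos_sq_add_sin_sq θ0)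
      have : ∀ᵐ x : EuclideanSpace ℝ (Fin N), ¬ (cos θ0 * (x i - a) + sin θ0 * (x j - b) = 0) := by
        rw [ae_iff]; simpa using h0
      filter_upwards [ae_restrict_of_ae this] with x hx
      have ct : Continuous fun θ => cos θ * (x i - a) + sin θ * (x j - b) := by fun_prop
      rcases lt_or_gt_of_ne hx with h' | h'
      · apply ContinuousAt.congr (continuousAt_const (y := (0:ℝ)))
        filter_upwards [(ct.tendsto θ0).eventually (gt_mem_nhds h')] with θ hθ
        rw [indicator_of_notMem]
        simp only [H, mem_ofPred_eq, not_lt]; exact hθ.le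
      · apply ContinuousAt.congr (continuousAt_const (y := f x))
        filter_upwards [(ct.tendsto θ0).eventually (lt_mem_nhds h')] with θ hθ
        rw [indicator_of_mem]
        exact hθ
  have anti : φ 0 + φ π = 0 := by
    have := split (cos 0) (sin 0) (cos_sq_add_sin_sq 0) f hf
    rw [f0] at this
    rw [φe, φe]
    simpa using this
  obtain ⟨θ, hθ⟩ : ∃ θ, φ θ = 0 := by
    rcases le_total (φ 0) 0 with h | h
    · exact mem_range_of_exists_le_of_exists_ge φc ⟨0, h⟩ ⟨π, by linarith⟩
    · exact mem_range_of_exists_le_of_exists_ge φc ⟨π, by linarith⟩ ⟨0, h⟩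
  have hcs := cos_sq_add_sin_sq θ
  have sf := split _ _ hcs f hf
  have sF := split _ _ hcs F hF
  rw [φe] at hθ
  rw [hθ, f0, zero_add] at sf
  by_cases hc : ∫ x in K ∩ H (cos θ) (sin θ), F x < 0
  · exact ⟨_, _, hcs, hθ, hc⟩
  · refine ⟨-cos θ, -sin θ, by simp, sf, ?_⟩
    change ∫ x in K ∩ H (-cos θ) (-sin θ), F x < 0
    linarith

lemma minor_zero {N : ℕ} {C : Set (EuclideanSpace ℝ (Fin N))} (i j : Fin N)
    (hC : ∀ a b : ℚ, ∃ c s : ℝ, c ^ 2 + s ^ 2 = 1 ∧ ∀ x ∈ C, 0 ≤ c * (x i - a) + s * (x j - b))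
    {x y z : EuclideanSpace ℝ (Fin N)} (hx : x ∈ C) (hy : y ∈ C) (hz : z ∈ C) :
    (y i - x i) * (z j - x j) = (y j - x j) * (z i - x i) := by
  by_contra hne
  set D := (y i - x i) * (z j - x j) - (y j - x j) * (z i - x i) with hD
  have hD0 : D ≠ 0 := sub_ne_zero.2 hne
  let U : ℝ × ℝ → ℝ := fun w => ((w.1 - x i) * (z j - x j) - (w.2 - x j) * (z i - x i)) / D
  let V : ℝ × ℝ → ℝ := fun w => ((y i - x i) * (w.2 - x j) - (y j - x j) * (w.1 - x i)) / D
  have oU : IsOpen {w | 0 < U w ∧ 0 < V w ∧ U w + V w < 1} := by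
    have cU : Continuous U := by fun_prop
    have cV : Continuous V := by fun_prop
    exact (isOpen_lt continuous_const cU).inter ((isOpen_lt continuous_const cV).inter (isOpen_lt (cU.add cV) continuous_const))
  have ne : {w | 0 < U w ∧ 0 < V w ∧ U w + V w < 1}.Nonempty := by
    refine ⟨(x i + (y i - x i) / 3 + (z i - x i) / 3, x j + (y j - x j) / 3 + (z j - x j) / 3), ?_⟩
    have h1 : U (x i + (y i - x i) / 3 + (z i - x i) / 3, x j + (y j - x j) / 3 + (z j - x j) / 3) = 1 / 3 := by
      simp only [U]; rw [div_eq_iff hD0, hD]; ring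
    have h2 : V (x i + (y i - x i) / 3 + (z i - x i) / 3, x j + (y j - x j) / 3 + (z j - x j) / 3) = 1 / 3 := by
      simp only [V]; rw [div_eq_iff hD0, hD]; ring
    simp only [mem_ofPred_eq, h1, h2]; norm_num
  have dr : DenseRange (Prod.map (fun q : ℚ => (q : ℝ)) (fun q : ℚ => (q : ℝ))) :=
    Rat.denseRange_cast.prodMap Rat.denseRange_cast
  obtain ⟨⟨a, b⟩, hu, hv, huv⟩ := dr.exists_mem_open oU ne
  obtain ⟨c, s, hcs, hl⟩ := hC a b
  simp only [Prod.map_apply] at hu hv huv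
  set u := U ((a:ℝ), (b:ℝ)) with hU'
  set v := V ((a:ℝ), (b:ℝ)) with hV'
  have ea : (a:ℝ) = x i + u * (y i - x i) + v * (z i - x i) := by
    simp only [hU', hV', U, V]; field_simp; rw [hD]; ring
  have eb : (b:ℝ) = x j + u * (y j - x j) + v * (z j - x j) := by
    simp only [hU', hV', U, V]; field_simp; rw [hD]; ring
  have lx := hl x hx
  have ly := hl y hy
  have lz := hl z hz
  set A := c * (x i - a) + s * (x j - b) with hA
  set B := c * (y i - a) + s * (y j - b) with hB
  set G := c * (z i - a) + s * (z j - b) with hG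
  have sum : (1 - u - v) * A + u * B + v * G = 0 := by
    rw [hA, hB, hG, ea, eb]; ring
  have w0 : 0 < 1 - u - v := by linarith
  have p1 := mul_nonneg w0.le lx
  have p2 := mul_nonneg hu.le ly
  have p3 := mul_nonneg hv.le lz
  have A0 : A = 0 := by
    have : (1 - u - v) * A = 0 := by linarith
    exact (mul_eq_zero.1 this).resolve_left w0.ne'
  have B0 : B = 0 := by
    have : u * B = 0 := by linarith
    exact (mul_eq_zero.1 this).resolve_left hu.ne'
  have G0 : G = 0 := by
    have : v * G = 0 := by linarith
    exact (mul_eq_zero.1 this).resolve_left hv.ne'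
  have r1 : c * (y i - x i) + s * (y j - x j) = 0 := by linarith
  have r2 : c * (z i - x i) + s * (z j - x j) = 0 := by linarith
  apply hD0
  have t1 : c * D = 0 := by
    rw [hD]; linear_combination (z j - x j) * r1 - (y j - x j) * r2
  have t2 : s * D = 0 := by
    rw [hD]; linear_combination (y i - x i) * r2 - (z i - x i) * r1
  have : D = c * (c * D) + s * (s * D) := by linear_combination (-D) * hcs
  rw [this, t1, t2]; simp

theorem loc {N : ℕ} (hN : 2 ≤ N) {Ω : Set (EuclideanSpace ℝ (Fin N))} (hΩo : IsOpen Ω)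
    (hΩb : Bornology.IsBounded Ω) (hΩc : Convex ℝ Ω)
    {f F : EuclideanSpace ℝ (Fin N) → ℝ} (hf : Continuous f) (hF : Continuous F)
    (f0 : ∫ x in Ω, f x = 0) (F0 : ∫ x in Ω, F x < 0) :
    ∃ a e : EuclideanSpace ℝ (Fin N), ‖e‖ = 1 ∧ ∀ δ > 0, ∃ K ⊆ Ω, IsOpen K ∧ Convex ℝ K ∧
      ∫ x in K, f x = 0 ∧ ∫ x in K, F x < 0 ∧ ∀ x ∈ K, ‖x - (a + inner ℝ e (x - a) • e)‖ ≤ δ := by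
  let P : Set (EuclideanSpace ℝ (Fin N)) → Prop := fun K => K ⊆ Ω ∧ IsOpen K ∧ Convex ℝ K ∧
      ∫ x in K, f x = 0 ∧ ∫ x in K, F x < 0
  have Pne : ∀ K, P K → K.Nonempty := by
    intro K hK
    rw [nonempty_iff_ne_empty]
    rintro rfl
    have := hK.2.2.2.2
    simp at this
  let T := Fin N × Fin N × ℚ × ℚ
  have step : ∀ K : {K // P K}, ∀ t : T, ∃ K' : {K // P K}, K'.1 ⊆ K.1 ∧ (t.1 ≠ t.2.1 →
      ∃ c s : ℝ, c ^ 2 + s ^ 2 = 1 ∧ ∀ x ∈ K'.1, 0 < c * (x t.1 - t.2.2.1) + s * (x t.2.1 - t.2.2.2)) := by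
    rintro ⟨K, hK⟩ ⟨i, j, a, b⟩
    by_cases hij : i = j
    · exact ⟨⟨K, hK⟩, subset_rfl, fun h => absurd hij h⟩
    · obtain ⟨c, s, hcs, h1, h2⟩ := halve hK.2.1 (hΩb.subset hK.1) hf hF hK.2.2.2.1 hK.2.2.2.2 i j hij a b
      have oo : IsOpen {x : EuclideanSpace ℝ (Fin N) | 0 < c * (x i - a) + s * (x j - b)} := isOpen_lt continuous_const (by fun_prop)
      refine ⟨⟨_, inter_subset_left.trans hK.1, hK.2.1.inter oo, hK.2.2.1.inter ?_, h1, h2⟩, inter_subset_left, fun _ => ⟨c, s, hcs, fun x hx => hx.2⟩⟩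
      intro x hx y hy u v hu hv huv
      simp only [mem_ofPred_eq] at hx hy ⊢
      have e : c * ((u • x + v • y : EuclideanSpace ℝ (Fin N)) i - a) + s * ((u • x + v • y : EuclideanSpace ℝ (Fin N)) j - b)
        = u * (c * (x i - a) + s * (x j - b)) + v * (c * (y i - a) + s * (y j - b)) := by
        simp; linear_combination (c * a + s * b) * huv
      rw [e]
      rcases hu.eq_or_lt with rfl | hu
      · have : v = 1 := by linarith
        rw [this]; linarith
      · have := mul_pos hu hx
        have := mul_nonneg hv hy.le
        linarith
  choose S hS1 hS2 using step
  have i0 : Fin N := ⟨0, by omega⟩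
  have : Nonempty T := ⟨(i0, i0, 0, 0)⟩
  obtain ⟨en, hen⟩ := exists_surjective_nat T
  let K : ℕ → {K // P K} := fun n => Nat.rec ⟨Ω, subset_rfl, hΩo, hΩc, f0, F0⟩ (fun n k => S k (en n)) n
  have Ks : ∀ n, K (n + 1) = S (K n) (en n) := fun n => rfl
  have Ka : Antitone fun n => (K n).1 := antitone_nat_of_succ_le fun n => by rw [Ks]; exact hS1 _ _
  have cpt : ∀ n, IsCompact (closure (K n).1) := fun n => (hΩb.subset (K n).2.1).isCompact_closure
  let C := ⋂ n, closure (K n).1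
  have Cne : C.Nonempty := IsCompact.nonempty_iInter_of_sequence_nonempty_isCompact_isClosed _
    (fun n => closure_mono (Ka (Nat.le_succ n))) (fun n => (Pne _ (K n).2).closure) (cpt 0) fun n => isClosed_closure
  have minor : ∀ i j, ∀ x ∈ C, ∀ y ∈ C, ∀ z ∈ C, (y i - x i) * (z j - x j) = (y j - x j) * (z i - x i) := by
    intro i j x hx y hy z hz
    by_cases hij : i = j
    · subst hij; ring
    refine minor_zero (C := C) i j ?_ hx hy hz
    intro a b
    obtain ⟨n, hn⟩ := hen (i, j, a, b)
    obtain ⟨c, s, hcs, h⟩ := hS2 (K n) (en n) (by rw [hn]; exact hij)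
    rw [← Ks, hn] at h
    refine ⟨c, s, hcs, fun x hx => ?_⟩
    have hx' := mem_iInter.1 hx (n + 1)
    have cl : IsClosed {x : EuclideanSpace ℝ (Fin N) | 0 ≤ c * (x i - a) + s * (x j - b)} := isClosed_le continuous_const (by fun_prop)
    exact closure_minimal (fun x hx => (h x hx).le) cl hx'
  obtain ⟨x0, hx0⟩ := Cne
  have line : ∃ e : EuclideanSpace ℝ (Fin N), ‖e‖ = 1 ∧ ∀ z ∈ C, z - (x0 + inner ℝ e (z - x0) • e) = 0 := by
    by_cases hs : ∃ y ∈ C, y ≠ x0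
    · obtain ⟨y, hy, hne⟩ := hs
      set v := y - x0 with hv
      have v0 : ‖v‖ ≠ 0 := norm_ne_zero_iff.2 (sub_ne_zero.2 hne)
      refine ⟨‖v‖⁻¹ • v, by rw [norm_smul, norm_inv, norm_norm, inv_mul_cancel₀ v0], fun z hz => ?_⟩
      have key : inner ℝ v (z - x0) • v = (‖v‖ ^ 2) • (z - x0) := by
        ext j
        rw [EuclideanSpace.norm_sq_eq]
        simp only [PiLp.smul_apply, PiLp.inner_apply, smul_eq_mul, Finset.sum_mul]
        refine Finset.sum_congr rfl fun i _ => ?_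
        have := minor i j x0 hx0 y hy z hz
        simp [hv]
        linear_combination (y i - x0 i) * (-this)
      rw [inner_smul_left, smul_smul]
      have : ((starRingEnd ℝ) ‖v‖⁻¹ * inner ℝ v (z - x0) * ‖v‖⁻¹) • v = z - x0 := by
        have e : (starRingEnd ℝ) ‖v‖⁻¹ * inner ℝ v (z - x0) * ‖v‖⁻¹ = (‖v‖ ^ 2)⁻¹ * inner ℝ v (z - x0) := by
          simp; field_simp
        rw [e, ← smul_smul, key, smul_smul, inv_mul_cancel₀ (by positivity), one_smul]
      rw [this]; abel
    · push Not at hs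
      refine ⟨EuclideanSpace.single i0 1, by simp, fun z hz => ?_⟩
      rw [hs z hz]; simp
  obtain ⟨e, he, hline⟩ := line
  refine ⟨x0, e, he, fun δ hδ => ?_⟩
  have : ∃ n, closure (K n).1 ⊆ {x | ‖x - (x0 + inner ℝ e (x - x0) • e)‖ < δ} := by
    apply exists_subset_nhds_of_isCompact
    · exact directed_of_isDirected_le fun m n h => closure_mono (Ka h)
    · exact cpt
    · intro x hx
      have op : IsOpen {x : EuclideanSpace ℝ (Fin N) | ‖x - (x0 + inner ℝ e (x - x0) • e)‖ < δ} :=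
        isOpen_lt (by fun_prop) continuous_const
      apply op.mem_nhds
      simp only [mem_ofPred_eq]
      rw [hline x hx]; simpa using hδ
  obtain ⟨n, hn⟩ := this
  obtain ⟨a1, a2, a3, a4, a5⟩ := (K n).2
  exact ⟨(K n).1, a1, a2, a3, a4, a5, fun x hx => (hn (subset_closure hx)).le⟩

lemma cont_spow {p : ℝ} (hp : 1 < p) : Continuous (fun x : ℝ => |x| ^ (p - 2) * x) := by
  have : (fun x : ℝ => |x| ^ (p - 2) * x) = fun x => (1 / p) * deriv (fun x : ℝ => |x| ^ p) x := by
    funext x; rw [(hasDerivAt_abs_rpow x hp).deriv]; field_simp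
  rw [this]
  have := (contDiff_norm_rpow (E := ℝ) hp).continuous_deriv le_rfl
  simp only [Real.norm_eq_abs] at this
  exact continuous_const.mul this

lemma spow_mul {p : ℝ} (hp : 1 < p) (a : ℝ) : |a| ^ (p - 2) * a * a = |a| ^ p := by
  by_cases ha : a = 0
  · subst ha; rw [mul_zero, abs_zero, Real.zero_rpow (by linarith)]
  · have h : 0 < |a| := abs_pos.2 ha
    have e : a * a = |a| ^ (2:ℝ) := by
      rw [Real.rpow_two, sq_abs, sq]
    rw [mul_assoc, e, ← Real.rpow_add h]; congr 1; ring

lemma tangent {p : ℝ} (hp : 1 < p) (a c : ℝ) :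
    |a| ^ p - p * c * (|a| ^ (p - 2) * a) ≤ |a - c| ^ p := by
  have y := young_pt hp (c - a) a 1 zero_le_one
  rw [Real.one_rpow, abs_sub_comm c a] at y
  have := spow_mul hp a
  linear_combination y - p * this

lemma bdd_integrable {N : ℕ} {K : Set (EuclideanSpace ℝ (Fin N))} (hKb : Bornology.IsBounded K)
    {g : EuclideanSpace ℝ (Fin N) → ℝ} (hg : Continuous g) : IntegrableOn g K :=
  (hg.continuousOn.integrableOn_compact hKb.isCompact_closure).mono_set subset_closure

theorem smooth_pw {n : ℕ} (hn : 1 ≤ n) {Ω : Set (EuclideanSpace ℝ (Fin (n+1)))} (hΩo : IsOpen Ω)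
    (hΩb : Bornology.IsBounded Ω) (hΩc : Convex ℝ Ω) (hd : 0 < diam Ω) {p C : ℝ} (hp : 1 < p)
    (hC : 0 < C) (hCd : C < (piP p / diam Ω) ^ p) {v : EuclideanSpace ℝ (Fin (n+1)) → ℝ}
    (hv : ContDiff ℝ 1 v) (hv0 : ∫ x in Ω, |v x| ^ (p - 2) * v x = 0) :
    C * ∫ x in Ω, |v x| ^ p ≤ ∫ x in Ω, ‖fderiv ℝ v x‖ ^ p := by
  have p0 : 0 < p := by linarith
  have vc : Continuous v := hv.continuous
  have dc : Continuous fun x => fderiv ℝ v x := hv.continuous_fderiv one_ne_zero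
  have rc : ∀ {X : Type} [TopologicalSpace X] {g : X → ℝ}, Continuous g → Continuous fun x => |g x| ^ p :=
    fun hg => hg.abs.rpow_const fun _ => Or.inr p0.le
  have dpc : Continuous fun x => ‖fderiv ℝ v x‖ ^ p := dc.norm.rpow_const fun _ => Or.inr p0.le
  have vpc : Continuous fun x => |v x| ^ p := rc vc
  by_contra hcon
  push Not at hcon
  set gap := C * (∫ x in Ω, |v x| ^ p) - ∫ x in Ω, ‖fderiv ℝ v x‖ ^ p with hgap
  have gap0 : 0 < gap := sub_pos.2 hcon
  set V := volume.real Ω with hV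
  have V0 : 0 ≤ V := measureReal_nonneg
  set η := gap / (V + 1) with hη
  have η0 : 0 < η := by positivity
  have fin : volume Ω ≠ ⊤ := hΩb.measure_lt_top.ne
  have Fneg : ∫ x in Ω, (‖fderiv ℝ v x‖ ^ p - C * |v x| ^ p + η) < 0 := by
    rw [integral_add (f := fun x => ‖fderiv ℝ v x‖ ^ p - C * |v x| ^ p) (g := fun _ => η), integral_sub, integral_const_mul, setIntegral_const, smul_eq_mul, ← hV]
    · have : V * η < gap := by
        rw [hη, mul_div_assoc', div_lt_iff₀ (by positivity)]; nlinarith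
      linarith
    · exact bdd_integrable hΩb dpc
    · exact bdd_integrable hΩb (vpc.const_mul C)
    · exact bdd_integrable hΩb (dpc.sub (vpc.const_mul C))
    · exact bdd_integrable hΩb continuous_const
  have fc : Continuous fun x => |v x| ^ (p - 2) * v x := (cont_spow hp).comp vc
  obtain ⟨a, e, he, hloc⟩ := loc (F := fun x => ‖fderiv ℝ v x‖ ^ p - C * |v x| ^ p + η) (by omega) hΩo hΩb hΩc fc ((dpc.sub (vpc.const_mul C)).add continuous_const) hv0 Fneg
  obtain ⟨R, hR⟩ := hΩb.subset_closedBall a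
  let Φ : EuclideanSpace ℝ (Fin (n+1)) × ℝ → ℝ := fun z => ‖fderiv ℝ v z.1‖ ^ p - C * |v z.1 - v (a + z.2 • e)| ^ p
  have Φc : Continuous Φ := by
    refine (dpc.comp continuous_fst).sub (continuous_const.mul (rc ?_))
    fun_prop
  have uc := ((isCompact_closedBall a R).prod (isCompact_Icc (a := -R) (b := R))).uniformContinuousOn_of_continuous Φc.continuousOn
  rw [Metric.uniformContinuousOn_iff] at uc
  obtain ⟨δ, δ0, hδ⟩ := uc η η0
  obtain ⟨K, hKΩ, hKo, hKc, hKf, hKF, hKδ⟩ := hloc (δ / 2) (by positivity)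
  have hKb := hΩb.subset hKΩ
  have Kne : K.Nonempty := by
    rw [nonempty_iff_ne_empty]; rintro rfl; simp at hKF
  obtain ⟨h, M, hm, h0, hM, lc, hsupp, hmarg⟩ := marginal n K hKo hKb hKc e he
  set t0 := inner ℝ e a with ht0
  have pr : ∀ x, inner ℝ e (x - a) = inner ℝ e x - t0 := fun x => inner_sub_right _ _ _
  let w : ℝ → ℝ := fun t => v (a + (t - t0) • e)
  let w' : ℝ → ℝ := fun t => fderiv ℝ v (a + (t - t0) • e) e
  have hw : ∀ t, HasDerivAt w (w' t) t := by
    intro t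
    have h1 : HasDerivAt (fun t : ℝ => a + (t - t0) • e) e t := by
      have := (((hasDerivAt_id t).sub_const t0).smul_const e).const_add a
      simpa using this
    exact ((hv.differentiable one_ne_zero) _).hasFDerivAt.comp_hasDerivAt t h1
  have hw' : Continuous w' := by
    have : Continuous fun t : ℝ => fderiv ℝ v (a + (t - t0) • e) := dc.comp (by fun_prop)
    exact this.clm_apply continuous_const
  have wc : Continuous w := continuous_iff_continuousAt.2 fun t => (hw t).continuousAt
  let I : Set ℝ := (fun x => inner ℝ e x) '' K
  have Ine : I.Nonempty := Kne.image _
  have Ibd : ∀ t ∈ I, t - t0 ∈ Icc (-R) R := by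
    rintro t ⟨x, hx, rfl⟩
    rw [← pr]
    have := abs_real_inner_le_norm e (x - a)
    rw [he, one_mul] at this
    have h2 := hR (hKΩ hx)
    rw [mem_closedBall, dist_eq_norm] at h2
    exact abs_le.1 (this.trans h2)
  have Iab : BddAbove I := ⟨t0 + R, fun t ht => by linarith [(Ibd t ht).2]⟩
  have Ibb : BddBelow I := ⟨t0 - R, fun t ht => by linarith [(Ibd t ht).1]⟩
  have hab : sInf I ≤ sSup I := Real.sInf_le_sSup I Ibb Iab
  have hL : sSup I - sInf I ≤ diam Ω := by
    rw [sub_le_iff_le_add]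
    apply csSup_le Ine
    intro t ht
    rw [add_comm, ← sub_le_iff_le_add]
    apply le_csInf Ine
    intro s hs
    obtain ⟨x, hx, rfl⟩ := ht
    obtain ⟨y, hy, rfl⟩ := hs
    have h1 := real_inner_le_norm e (x - y)
    rw [he, one_mul, inner_sub_right, ← dist_eq_norm] at h1
    have h2 := dist_le_diam_of_mem hΩb (hKΩ hx) (hKΩ hy)
    simp only
    linarith
  have hz : ∀ t, t ∉ Icc (sInf I) (sSup I) → h t = 0 := by
    intro t ht
    by_contra hc
    obtain ⟨x, hx, rfl⟩ := hsupp t hc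
    exact ht ⟨csInf_le Ibb ⟨x, hx, rfl⟩, le_csSup Iab ⟨x, hx, rfl⟩⟩
  obtain ⟨m, hmI, hneedle⟩ := needle hp hd hC hCd hm h0 hM lc hab hL hz hw hw'
  have hm' : m - t0 ∈ Icc (-R) R := by
    constructor
    · have : t0 - R ≤ sInf I := le_csInf Ine fun t ht => by linarith [(Ibd t ht).1]
      linarith [hmI.1]
    · have : sSup I ≤ t0 + R := csSup_le Ine fun t ht => by linarith [(Ibd t ht).2]
      linarith [hmI.2]
  have c1 : Continuous fun t => |w t - w m| ^ p := rc (by fun_prop)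
  have c2 : Continuous fun t => |w' t| ^ p := rc hw'
  rw [← hmarg _ c1, ← hmarg _ c2] at hneedle
  have ci : Continuous fun x : EuclideanSpace ℝ (Fin (n+1)) => inner ℝ e x := by fun_prop
  have i1 : IntegrableOn (fun x : EuclideanSpace ℝ (Fin (n+1)) => |w (inner ℝ e x) - w m| ^ p) K := bdd_integrable hKb (c1.comp ci)
  have i2 : IntegrableOn (fun x : EuclideanSpace ℝ (Fin (n+1)) => |w' (inner ℝ e x)| ^ p) K := bdd_integrable hKb (c2.comp ci)
  have i3 : IntegrableOn (fun x => |v x| ^ (p - 2) * v x) K := bdd_integrable hKb fc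
  have low : ∫ x in K, ((|w' (inner ℝ e x)| ^ p - C * |w (inner ℝ e x) - w m| ^ p) - C * p * w m * (|v x| ^ (p - 2) * v x)) ≤
      ∫ x in K, (‖fderiv ℝ v x‖ ^ p - C * |v x| ^ p + η) := by
    refine setIntegral_mono_on ((i2.sub (i1.const_mul C)).sub (i3.const_mul _)) (bdd_integrable hKb ((dpc.sub (vpc.const_mul C)).add continuous_const)) hKo.measurableSet ?_
    intro x hx
    have hxB : x ∈ closedBall a R := hR (hKΩ hx)
    have hxI := Ibd _ ⟨x, hx, rfl⟩
    simp only at hxI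
    set y := a + (inner ℝ e x - t0) • e with hy
    have hyB : y ∈ closedBall a R := by
      rw [mem_closedBall, dist_eq_norm, hy, add_sub_cancel_left, norm_smul, he, mul_one]
      exact abs_le.2 hxI
    have dxy : dist x y < δ := by
      have := hKδ x hx
      rw [pr, ← dist_eq_norm] at this
      linarith
    have u := hδ (x, m - t0) ⟨hxB, hm'⟩ (y, m - t0) ⟨hyB, hm'⟩ (by rw [Prod.dist_eq]; simpa using dxy)
    rw [Real.dist_eq, abs_lt] at u
    have u1 := u.1
    simp only [Φ] at u1
    have t1 := tangent hp (v x) (w m)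
    have t2 : |w' (inner ℝ e x)| ^ p ≤ ‖fderiv ℝ v y‖ ^ p := by
      apply Real.rpow_le_rpow (abs_nonneg _) _ p0.le
      have := (fderiv ℝ v y).le_opNorm e
      rwa [he, mul_one] at this
    have t3 := mul_le_mul_of_nonneg_left t1 hC.le
    have e1 : w (inner ℝ e x) = v y := rfl
    have e2 : w m = v (a + (m - t0) • e) := rfl
    rw [← e2] at u1
    rw [e1]
    linear_combination u1 + t2 + t3
  have i4 : IntegrableOn (fun x : EuclideanSpace ℝ (Fin (n+1)) => |w' (inner ℝ e x)| ^ p - C * |w (inner ℝ e x) - w m| ^ p) K := i2.sub (i1.const_mul C)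
  rw [integral_sub i4 (i3.const_mul _), integral_sub i2 (i1.const_mul C), integral_const_mul,
    integral_const_mul, hKf] at low
  linarith

lemma exists_center {N : ℕ} {Ω : Set (EuclideanSpace ℝ (Fin N))} (hΩo : IsOpen Ω)
    (hΩb : Bornology.IsBounded Ω) {p M : ℝ} (hp : 1 < p) (hM0 : 0 ≤ M) {u : EuclideanSpace ℝ (Fin N) → ℝ}
    (hu : Continuous u) (hM : ∀ x ∈ Ω, |u x| ≤ M) :
    ∃ c ∈ Icc (-M) M, ∫ x in Ω, |u x - c| ^ (p - 2) * (u x - c) = 0 := by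
  have sc := cont_spow hp
  obtain ⟨B, hB⟩ := (isCompact_Icc (a := -(2 * M)) (b := 2 * M)).exists_bound_of_continuousOn sc.continuousOn
  have cont : ContinuousOn (fun c => ∫ x in Ω, |u x - c| ^ (p - 2) * (u x - c)) (Icc (-M) M) := by
    apply continuousOn_of_dominated (bound := fun _ => B)
    · intro c _
      exact (sc.comp (by fun_prop : Continuous fun x => u x - c)).aestronglyMeasurable
    · intro c hc
      filter_upwards [ae_restrict_mem hΩo.measurableSet] with x hx
      apply hB
      have := abs_le.1 (hM x hx)
      exact ⟨by linarith [hc.2], by linarith [hc.1]⟩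
    · exact integrableOn_const hΩb.measure_lt_top.ne
    · exact Filter.Eventually.of_forall fun x => (sc.comp (by fun_prop : Continuous fun c => u x - c)).continuousOn
  have mem : (0:ℝ) ∈ Icc (∫ x in Ω, |u x - M| ^ (p - 2) * (u x - M)) (∫ x in Ω, |u x - (-M)| ^ (p - 2) * (u x - (-M))) := by
    constructor
    · apply setIntegral_nonpos hΩo.measurableSet
      intro x hx
      have := abs_le.1 (hM x hx)
      exact mul_nonpos_of_nonneg_of_nonpos (Real.rpow_nonneg (abs_nonneg _) _) (by linarith)
    · apply setIntegral_nonneg hΩo.measurableSet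
      intro x hx
      have := abs_le.1 (hM x hx)
      exact mul_nonneg (Real.rpow_nonneg (abs_nonneg _) _) (by linarith)
  obtain ⟨c, hc, h⟩ := intermediate_value_Icc' (by linarith : -M ≤ M) cont mem
  exact ⟨c, hc, h⟩

lemma fderiv_moll {n : ℕ} {K : NNReal} {g : EuclideanSpace ℝ (Fin n) → ℝ} (hg : LipschitzWith K g)
    (φ : ContDiffBump (0 : EuclideanSpace ℝ (Fin n))) (x : EuclideanSpace ℝ (Fin n)) :
    fderiv ℝ (convolution (φ.normed volume) g (ContinuousLinearMap.lsmul ℝ ℝ) volume) x =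
      convolution (φ.normed volume) (fderiv ℝ g) (ContinuousLinearMap.lsmul ℝ ℝ) volume x ∧
    ‖fderiv ℝ (convolution (φ.normed volume) g (ContinuousLinearMap.lsmul ℝ ℝ) volume) x‖ ≤ K := by
  set ψ := φ.normed volume with hψ
  have ψc : Continuous ψ := φ.continuous_normed
  have ψi : Integrable ψ volume := φ.integrable_normed
  have ψ0 : ∀ t, 0 ≤ ψ t := φ.nonneg_normed
  have gc := hg.continuous
  have meas : Measurable (fderiv ℝ g) := measurable_fderiv ℝ g
  have main := hasFDerivAt_integral_of_dominated_loc_of_lip (μ := volume) (𝕜 := ℝ)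
    (F := fun x t => ψ t * g (x - t)) (x₀ := x) (bound := fun t => ψ t * K) (s := univ)
    (F' := fun t => ψ t • fderiv ℝ g (x - t)) Filter.univ_mem ?_ ?_ ?_ ?_ ?_ ?_
  · have e : fderiv ℝ (convolution ψ g (ContinuousLinearMap.lsmul ℝ ℝ) volume) x =
      convolution ψ (fderiv ℝ g) (ContinuousLinearMap.lsmul ℝ ℝ) volume x := by
      have := main.2.fderiv
      rw [convolution_def]
      simp only [ContinuousLinearMap.lsmul_apply]
      rw [← this]
      rfl
    refine ⟨e, ?_⟩
    rw [e, convolution_def]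
    simp only [ContinuousLinearMap.lsmul_apply]
    calc _ ≤ ∫ t, ψ t * K := by
          apply norm_integral_le_of_norm_le (ψi.mul_const _)
          refine Filter.Eventually.of_forall fun t => ?_
          rw [norm_smul, Real.norm_eq_abs, abs_of_nonneg (ψ0 t)]
          exact mul_le_mul_of_nonneg_left (norm_fderiv_le_of_lipschitz ℝ hg) (ψ0 t)
      _ = K := by rw [integral_mul_const, φ.integral_normed, one_mul]
  · exact Filter.Eventually.of_forall fun y => (by fun_prop : Continuous fun t => ψ t * g (y - t)).aestronglyMeasurable
  · exact (by fun_prop : Continuous fun t => ψ t * g (x - t)).integrable_of_hasCompactSupport (φ.hasCompactSupport_normed.mul_right)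
  · exact (ψc.measurable.smul (meas.comp (by fun_prop))).aestronglyMeasurable
  · refine Filter.Eventually.of_forall fun t => ?_
    rw [lipschitzOnWith_iff_dist_le_mul]
    intro y _ z _
    rw [Real.dist_eq, ← mul_sub, abs_mul, Real.coe_nnabs, abs_of_nonneg (ψ0 t), abs_of_nonneg (mul_nonneg (ψ0 t) K.coe_nonneg), mul_assoc]
    apply mul_le_mul_of_nonneg_left _ (ψ0 t)
    have := hg.dist_le_mul (y - t) (z - t)
    rwa [Real.dist_eq, dist_sub_right] at this
  · exact ψi.mul_const _
  · have h1 := hg.ae_differentiableAt (μ := volume)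
    have h2 := (quasiMeasurePreserving_sub_left volume x).ae h1
    filter_upwards [h2] with t ht
    have h3 : HasFDerivAt (fun y => g (y - t)) (fderiv ℝ g (x - t)) x := by
      have := ht.hasFDerivAt.comp x ((hasFDerivAt_id x).sub_const t)
      simpa [Function.comp_def] using this
    exact h3.const_mul (ψ t)

theorem lip_pw {n : ℕ} (hn : 1 ≤ n) {Ω : Set (EuclideanSpace ℝ (Fin (n+1)))} (hΩo : IsOpen Ω)
    (hΩb : Bornology.IsBounded Ω) (hΩc : Convex ℝ Ω) (hd : 0 < diam Ω) {p C : ℝ} (hp : 1 < p)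
    (hC : 0 < C) (hCd : C < (piP p / diam Ω) ^ p) {g : EuclideanSpace ℝ (Fin (n+1)) → ℝ} {K : NNReal}
    (hg : LipschitzWith K g) :
    ∃ c, C * ∫ x in Ω, |g x - c| ^ p ≤ ∫ x in Ω, ‖fderiv ℝ g x‖ ^ p := by
  have p0 : 0 < p := by linarith
  have gc := hg.continuous
  have fin : volume Ω ≠ ⊤ := hΩb.measure_lt_top.ne
  let φ : ℕ → ContDiffBump (0 : EuclideanSpace ℝ (Fin (n+1))) := fun k =>
    ⟨1 / ((k:ℝ) + 1) / 2, 1 / ((k:ℝ) + 1), by positivity, by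
      have : 0 < 1 / ((k:ℝ) + 1) := by positivity
      linarith⟩
  have φ0 : Filter.Tendsto (fun k => (φ k).rOut) Filter.atTop (𝓝 0) := tendsto_one_div_add_atTop_nhds_zero_nat
  let v : ℕ → EuclideanSpace ℝ (Fin (n+1)) → ℝ := fun k =>
    convolution ((φ k).normed volume) g (ContinuousLinearMap.lsmul ℝ ℝ) volume
  have vd : ∀ k, ContDiff ℝ 1 (v k) := fun k =>
    HasCompactSupport.contDiff_convolution_left _ (φ k).hasCompactSupport_normed
      ((φ k).contDiff_normed (n := 1)) gc.locallyIntegrable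
  obtain ⟨M0, hM0⟩ := hΩb.isCompact_closure.exists_bound_of_continuousOn gc.continuousOn
  set M := |M0| + K with hM
  have Mn : 0 ≤ M := by positivity
  have vM : ∀ k, ∀ x ∈ Ω, |v k x| ≤ M := by
    intro k x hx
    have h1 := ContDiffBump.dist_normed_convolution_le (φ := φ k) (μ := volume) (x₀ := x) (ε := K) gc.aestronglyMeasurable (fun y hy => by
      refine (hg.dist_le_mul y x).trans ?_
      have h2 : dist y x ≤ 1 := by
        rw [mem_ball] at hy
        refine hy.le.trans ?_
        simp only [φ]
        rw [div_le_one (by positivity)]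
        have := Nat.cast_nonneg (α := ℝ) k
        linarith
      have := mul_le_mul_of_nonneg_left h2 K.coe_nonneg
      simpa using this)
    have h2 := hM0 x (subset_closure hx)
    rw [Real.norm_eq_abs] at h2
    rw [Real.dist_eq] at h1
    have h3 := abs_sub_abs_le_abs_sub (v k x) (g x)
    have h4 := le_abs_self M0
    have h5 : |v k x - g x| ≤ K := h1
    linarith
  have cen := fun k => exists_center hΩo hΩb hp Mn (vd k).continuous (vM k)
  choose c hc hc0 using cen
  have dv : ∀ k x c, fderiv ℝ (fun x => v k x - c) x = fderiv ℝ (v k) x := fun k x c => fderiv_sub_const c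
  have ineq : ∀ k, C * ∫ x in Ω, |v k x - c k| ^ p ≤ ∫ x in Ω, ‖fderiv ℝ (v k) x‖ ^ p := by
    intro k
    have := smooth_pw hn hΩo hΩb hΩc hd hp hC hCd ((vd k).sub contDiff_const) (hc0 k)
    simpa only [dv] using this
  obtain ⟨c0, hc0', s, hs, hlim⟩ := isCompact_Icc.tendsto_subseq hc
  refine ⟨c0, ?_⟩
  have L1 : Filter.Tendsto (fun k => ∫ x in Ω, ‖fderiv ℝ (v (s k)) x‖ ^ p) Filter.atTop (𝓝 (∫ x in Ω, ‖fderiv ℝ g x‖ ^ p)) := by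
    apply tendsto_integral_of_dominated_convergence (fun _ => (K:ℝ) ^ p)
    · intro k
      exact (((vd (s k)).continuous_fderiv one_ne_zero).norm.rpow_const fun _ => Or.inr p0.le).aestronglyMeasurable
    · exact integrableOn_const fin
    · intro k
      refine Filter.Eventually.of_forall fun x => ?_
      rw [Real.norm_eq_abs, abs_of_nonneg (Real.rpow_nonneg (norm_nonneg _) _)]
      exact Real.rpow_le_rpow (norm_nonneg _) (fderiv_moll hg (φ (s k)) x).2 p0.le
    · have li : LocallyIntegrable (fderiv ℝ g) volume := by
        refine (locallyIntegrable_const (K:ℝ)).mono (measurable_fderiv ℝ g).aestronglyMeasurable ?_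
        refine Filter.Eventually.of_forall fun x => ?_
        rw [Real.norm_eq_abs, abs_of_nonneg K.coe_nonneg]
        exact norm_fderiv_le_of_lipschitz ℝ hg
      have := ContDiffBump.ae_convolution_tendsto_right_of_locallyIntegrable (K := 2) φ0 (Filter.Eventually.of_forall fun k => by
        simp only [φ]; linarith) li
      filter_upwards [ae_restrict_of_ae this] with x hx
      have hx' := (hx.comp hs.tendsto_atTop).norm.rpow_const (p := p) (Or.inr p0.le)
      refine hx'.congr fun k => ?_
      simp only [Function.comp_def]
      rw [← (fderiv_moll hg (φ (s k)) x).1]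
  have L2 : Filter.Tendsto (fun k => C * ∫ x in Ω, |v (s k) x - c (s k)| ^ p) Filter.atTop (𝓝 (C * ∫ x in Ω, |g x - c0| ^ p)) := by
    apply Filter.Tendsto.const_mul
    apply tendsto_integral_of_dominated_convergence (fun _ => (2 * M) ^ p)
    · intro k
      exact ((((vd (s k)).continuous).sub continuous_const).abs.rpow_const fun _ => Or.inr p0.le).aestronglyMeasurable
    · exact integrableOn_const fin
    · intro k
      filter_upwards [ae_restrict_mem hΩo.measurableSet] with x hx
      rw [Real.norm_eq_abs, abs_of_nonneg (Real.rpow_nonneg (abs_nonneg _) _)]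
      apply Real.rpow_le_rpow (abs_nonneg _) _ p0.le
      have h1 := abs_le.1 (vM (s k) x hx)
      have h2 := hc (s k)
      rw [abs_le]
      exact ⟨by linarith [h2.2], by linarith [h2.1]⟩
    · refine Filter.Eventually.of_forall fun x => ?_
      have h1 := (ContDiffBump.convolution_tendsto_right_of_continuous (μ := volume) φ0 gc x).comp hs.tendsto_atTop
      exact ((h1.sub hlim).abs).rpow_const (Or.inr p0.le)
  exact le_of_tendsto_of_tendsto' L2 L1 fun k => ineq (s k)

lemma holder_bdd {N : ℕ} {Ω : Set (EuclideanSpace ℝ (Fin N))}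
    (hΩb : Bornology.IsBounded Ω) {p q : ℝ} (hq : 1 < q) (hqp : q < p) {u : EuclideanSpace ℝ (Fin N) → ℝ}
    (hu : Continuous u) :
    ∫ x in Ω, |u x| ^ q ≤ (∫ x in Ω, |u x| ^ p) ^ (q / p) * volume.real Ω ^ (1 - q / p) := by
  have q0 : 0 < q := by linarith
  have p0 : 0 < p := by linarith
  have fin : volume Ω ≠ ⊤ := hΩb.measure_lt_top.ne
  have : IsFiniteMeasure (volume.restrict Ω) := ⟨by simpa using hΩb.measure_lt_top⟩
  have h1 : 1 < p / q := by rw [lt_div_iff₀ q0]; linarith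
  have hc : (p / q).HolderConjugate (p / q / (p / q - 1)) := Real.HolderConjugate.conjExponent h1
  have uc : Continuous fun x => |u x| ^ q := hu.abs.rpow_const fun _ => Or.inr q0.le
  obtain ⟨B, hB⟩ := hΩb.isCompact_closure.exists_bound_of_continuousOn uc.continuousOn
  have m1 : MemLp (fun x => |u x| ^ q) (ENNReal.ofReal (p / q)) (volume.restrict Ω) := by
    refine MemLp.of_bound uc.aestronglyMeasurable B ?_
    have := ae_restrict_of_ae_restrict_of_subset (μ := volume) (subset_closure (s := Ω)) (ae_restrict_mem isClosed_closure.measurableSet)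
    filter_upwards [this] with x hx
    exact hB x hx
  have m2 : MemLp (fun _ : EuclideanSpace ℝ (Fin N) => (1:ℝ)) (ENNReal.ofReal (p / q / (p / q - 1))) (volume.restrict Ω) := memLp_const 1
  have := integral_mul_le_Lp_mul_Lq_of_nonneg hc (Filter.Eventually.of_forall fun x => Real.rpow_nonneg (abs_nonneg (u x)) q)
    (Filter.Eventually.of_forall fun _ => zero_le_one) m1 m2
  simp only [mul_one, Real.one_rpow] at this
  have e1 : ∀ x, (|u x| ^ q) ^ (p / q) = |u x| ^ p := fun x => by
    rw [← Real.rpow_mul (abs_nonneg _), mul_div_cancel₀ _ q0.ne']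
  have e2 : 1 / (p / q) = q / p := one_div_div _ _
  have e3 : 1 / (p / q / (p / q - 1)) = 1 - q / p := by field_simp
  have e4 : ∫ x in Ω, (1:ℝ) = volume.real Ω := by simp
  rw [e2, e3, e4] at this
  simpa only [e1] using this

lemma rayleigh_lower {n : ℕ} (hn : 1 ≤ n) {Ω : Set (EuclideanSpace ℝ (Fin (n+1)))} (hΩo : IsOpen Ω)
    (hΩb : Bornology.IsBounded Ω) (hΩc : Convex ℝ Ω) (hd : 0 < diam Ω) {p q : ℝ} (hq : 1 < q) (hqp : q < p)
    {v : EuclideanSpace ℝ (Fin (n+1)) → ℝ} {K : NNReal} (hv : LipschitzOnWith K v (closure Ω))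
    (hne : ∃ x ∈ Ω, v x ≠ 0) (h0 : ∫ x in Ω, |v x| ^ (q - 2) * v x = 0) :
    volume.real Ω ^ (1 - p / q) * (piP p / diam Ω) ^ p ≤
      (∫ x in Ω, ‖fderiv ℝ v x‖ ^ p) / (∫ x in Ω, |v x| ^ q) ^ (p / q) := by
  have q0 : 0 < q := by linarith
  have p0 : 0 < p := by linarith
  have p1 : 1 < p := by linarith
  have fin : volume Ω ≠ ⊤ := hΩb.measure_lt_top.ne
  obtain ⟨g, hg, hvg⟩ := hv.extend_real
  have eq : ∀ x ∈ Ω, v x = g x := fun x hx => hvg (subset_closure hx)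
  have E1 : ∫ x in Ω, ‖fderiv ℝ v x‖ ^ p = ∫ x in Ω, ‖fderiv ℝ g x‖ ^ p := by
    apply setIntegral_congr_fun hΩo.measurableSet
    intro x hx
    have : v =ᶠ[𝓝 x] g := by
      filter_upwards [hΩo.mem_nhds hx] with y hy
      exact eq y hy
    simp only [this.fderiv_eq]
  have E2 : ∫ x in Ω, |v x| ^ q = ∫ x in Ω, |g x| ^ q := by
    apply setIntegral_congr_fun hΩo.measurableSet
    intro x hx
    simp only [eq x hx]
  have E3 : ∫ x in Ω, |g x| ^ (q - 2) * g x = 0 := by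
    rw [← h0]
    apply setIntegral_congr_fun hΩo.measurableSet
    intro x hx
    simp only [eq x hx]
  rw [E1, E2]
  have gc := hg.continuous
  have gq : ∀ c, Continuous fun x => |g x - c| ^ q := fun c => (gc.sub continuous_const).abs.rpow_const fun _ => Or.inr q0.le
  have gq0 : Continuous fun x => |g x| ^ q := gc.abs.rpow_const fun _ => Or.inr q0.le
  obtain ⟨x1, hx1, hx1'⟩ := hne
  rw [eq x1 hx1] at hx1'
  have Vpos : 0 < volume.real Ω := ENNReal.toReal_pos (hΩo.measure_pos volume ⟨x1, hx1⟩).ne' fin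
  set A := ∫ x in Ω, |g x| ^ q with hA
  set D := ∫ x in Ω, ‖fderiv ℝ g x‖ ^ p with hD
  set V := volume.real Ω
  have D0 : 0 ≤ D := integral_nonneg fun x => Real.rpow_nonneg (norm_nonneg _) _
  have A0 : 0 < A := by
    rw [hA, setIntegral_pos_iff_support_of_nonneg_ae]
    · have o : IsOpen (Function.support (fun x => |g x| ^ q) ∩ Ω) := gq0.isOpen_support.inter hΩo
      refine o.measure_pos volume ⟨x1, ?_, hx1⟩
      rw [Function.mem_support]
      exact (Real.rpow_pos_of_pos (abs_pos.2 hx1') _).ne'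
    · exact Filter.Eventually.of_forall fun x => Real.rpow_nonneg (abs_nonneg _) _
    · exact bdd_integrable hΩb gq0
  have Apq : 0 < A ^ (p / q) := Real.rpow_pos_of_pos A0 _
  have Vp : 0 < V ^ (p / q - 1) := Real.rpow_pos_of_pos Vpos _
  have key : ∀ C, 0 < C → C < (piP p / diam Ω) ^ p → C * A ^ (p / q) ≤ V ^ (p / q - 1) * D := by
    intro C hC hCd
    obtain ⟨c, hc⟩ := lip_pw hn hΩo hΩb hΩc hd p1 hC hCd hg
    have s1 : A ≤ ∫ x in Ω, |g x - c| ^ q := by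
      have i1 : IntegrableOn (fun x => |g x| ^ q) Ω := bdd_integrable hΩb gq0
      have i2 : IntegrableOn (fun x => |g x| ^ (q - 2) * g x) Ω := bdd_integrable hΩb ((cont_spow hq).comp gc)
      have i3 : IntegrableOn (fun x => |g x| ^ q - q * c * (|g x| ^ (q - 2) * g x)) Ω := i1.sub (i2.const_mul _)
      have := setIntegral_mono_on i3 (bdd_integrable hΩb (gq c)) hΩo.measurableSet (fun x _ => tangent hq (g x) c)
      rw [integral_sub i1 (i2.const_mul _), integral_const_mul, E3, mul_zero, sub_zero] at this
      exact this
    have s2 := s1.trans (holder_bdd hΩb hq hqp (u := fun x => g x - c) (by fun_prop))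
    set G := ∫ x in Ω, |g x - c| ^ p with hG
    have G0 : 0 ≤ G := integral_nonneg fun x => Real.rpow_nonneg (abs_nonneg _) _
    have s3 : A ^ (p / q) ≤ G * V ^ (p / q - 1) := by
      calc A ^ (p / q) ≤ (G ^ (q / p) * V ^ (1 - q / p)) ^ (p / q) :=
            Real.rpow_le_rpow A0.le s2 (by positivity)
        _ = _ := by
          rw [Real.mul_rpow (by positivity) (by positivity), ← Real.rpow_mul G0, ← Real.rpow_mul Vpos.le]
          have e1 : q / p * (p / q) = 1 := by field_simp
          have e2 : (1 - q / p) * (p / q) = p / q - 1 := by field_simp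
          rw [e1, e2, Real.rpow_one]
    calc C * A ^ (p / q) ≤ C * (G * V ^ (p / q - 1)) := mul_le_mul_of_nonneg_left s3 hC.le
      _ = (C * G) * V ^ (p / q - 1) := by ring
      _ ≤ D * V ^ (p / q - 1) := mul_le_mul_of_nonneg_right hc Vp.le
      _ = _ := mul_comm _ _
  have fin2 : (piP p / diam Ω) ^ p ≤ V ^ (p / q - 1) * D / A ^ (p / q) := by
    by_contra hcon
    push Not at hcon
    obtain ⟨C, h1, h2⟩ := exists_between hcon
    have X0 : 0 ≤ V ^ (p / q - 1) * D / A ^ (p / q) := by positivity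
    have := key C (X0.trans_lt h1) h2
    rw [div_lt_iff₀ Apq] at h1
    linarith
  have e : V ^ (1 - p / q) = (V ^ (p / q - 1))⁻¹ := by
    rw [← Real.rpow_neg Vpos.le]; congr 1; ring
  rw [e, inv_mul_le_iff₀ Vp]
  calc _ ≤ _ := fin2
    _ = _ := by ring

lemma diam_pos {n : ℕ} {Ω : Set (EuclideanSpace ℝ (Fin (n+1)))} (hΩo : IsOpen Ω)
    (hΩb : Bornology.IsBounded Ω) (hΩne : Ω.Nonempty) : 0 < diam Ω := by
  obtain ⟨x, hx⟩ := hΩne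
  obtain ⟨ε, ε0, hε⟩ := Metric.isOpen_iff.1 hΩo x hx
  have := diam_mono hε hΩb
  rw [diam_ball_eq x ε0.le] at this
  linarith

lemma exists_test {n : ℕ} {Ω : Set (EuclideanSpace ℝ (Fin (n+1)))} (hΩo : IsOpen Ω)
    (hΩb : Bornology.IsBounded Ω) (hΩne : Ω.Nonempty) {q : ℝ} (hq : 1 < q) :
    ∃ v : EuclideanSpace ℝ (Fin (n+1)) → ℝ, ∃ K : NNReal,
    LipschitzOnWith K v (closure Ω) ∧ (∃ x ∈ Ω, v x ≠ 0) ∧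
    (∫ x in Ω, |v x| ^ (q - 2) * v x) = 0 := by
  have uc : Continuous fun x : EuclideanSpace ℝ (Fin (n+1)) => x 0 := by fun_prop
  obtain ⟨M, hM⟩ := hΩb.isCompact_closure.exists_bound_of_continuousOn uc.continuousOn
  have M0 : 0 ≤ M := by
    obtain ⟨x, hx⟩ := hΩne
    exact (norm_nonneg _).trans (hM x (subset_closure hx))
  obtain ⟨c, -, hc⟩ := exists_center hΩo hΩb hq M0 uc (fun x hx => hM x (subset_closure hx))
  have lip : LipschitzWith ‖(EuclideanSpace.proj 0 : EuclideanSpace ℝ (Fin (n+1)) →L[ℝ] ℝ)‖₊ (fun x : EuclideanSpace ℝ (Fin (n+1)) => x 0 - c) := by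
    have h1 := (EuclideanSpace.proj 0 : EuclideanSpace ℝ (Fin (n+1)) →L[ℝ] ℝ).lipschitz
    intro x y
    have := h1 x y
    rw [edist_sub_right]
    simpa using this
  refine ⟨fun x => x 0 - c, _, lip.lipschitzOnWith, ?_, hc⟩
  obtain ⟨x, hx⟩ := hΩne
  by_contra hcon
  push Not at hcon
  obtain ⟨ε, ε0, hε⟩ := Metric.isOpen_iff.1 hΩo x hx
  have h1 := hcon x hx
  have h2 := hcon (x + EuclideanSpace.single 0 (ε / 2)) (hε (by
    rw [mem_ball, dist_eq_norm, add_sub_cancel_left, EuclideanSpace.norm_single, Real.norm_eq_abs, abs_of_pos (by positivity)]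
    linarith))
  simp at h2
  linarith

lemma final_alg {P d r b V p q N : ℝ} (hP : 0 ≤ P) (hd : 0 < d) (hr : 0 < r) (hb : 0 < b) (hV : 0 < V)
    (hq : 1 < q) (hqp : q < p) (hVW : V ≤ b * (d / (2 * r)) ^ N) :
    (P / (b ^ (1 / q - 1 / p) * (2 * r))) ^ p * ((2 * r) / d) ^ (p + N * p / q - N) ≤
      V ^ (1 - p / q) * (P / d) ^ p := by
  have q0 : 0 < q := by linarith
  have p0 : 0 < p := by linarith
  set R := 2 * r with hR
  have R0 : 0 < R := by positivity
  have ex : 1 - p / q ≤ 0 := by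
    rw [sub_nonpos, le_div_iff₀ q0]; linarith
  have s1 := Real.rpow_le_rpow_of_nonpos hV hVW ex
  refine le_trans (le_of_eq ?_) (mul_le_mul_of_nonneg_right s1 (by positivity))
  rw [Real.mul_rpow hb.le (by positivity), ← Real.rpow_mul (by positivity), Real.div_rpow hP (by positivity),
    Real.div_rpow hP hd.le, Real.mul_rpow (by positivity) R0.le, ← Real.rpow_mul hb.le]
  have e1 : (1 / q - 1 / p) * p = p / q - 1 := by field_simp
  have e2 : p + N * p / q - N = p + -(N * (1 - p / q)) := by field_simp; ring
  have e3 : b ^ (1 - p / q) = (b ^ (p / q - 1))⁻¹ := by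
    rw [← Real.rpow_neg hb.le]; congr 1; ring
  have e4 : (d / R) ^ (N * (1 - p / q)) = (R / d) ^ (-(N * (1 - p / q))) := by
    rw [Real.rpow_neg (by positivity), ← Real.inv_rpow (by positivity), inv_div]
  rw [e1, e2, e3, e4, Real.rpow_add (by positivity), Real.div_rpow R0.le hd.le]
  have := Real.rpow_pos_of_pos R0 p
  have := Real.rpow_pos_of_pos hd p
  have := Real.rpow_pos_of_pos hb (p / q - 1)
  field_simp

lemma vol_bound {n : ℕ} {Ω : Set (EuclideanSpace ℝ (Fin (n+1)))} (hΩo : IsOpen Ω)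
    (hΩb : Bornology.IsBounded Ω) (c : EuclideanSpace ℝ (Fin (n+1))) {r : ℝ} (hr : 0 < r) :
    volume.real Ω ≤ volume.real (ball c r) * (diam Ω / (2 * r)) ^ (((n+1 : ℕ) : ℝ)) := by
  have h := isodiametric (n+1) Ω hΩo hΩb
  have h' : volume.real Ω ≤ volume.real (closedBall (0 : EuclideanSpace ℝ (Fin (n+1))) (diam Ω / 2)) :=
    ENNReal.toReal_mono measure_closedBall_lt_top.ne h
  refine h'.trans (le_of_eq ?_)
  rw [Measure.real, Measure.real, Measure.addHaar_closedBall volume _ (by positivity : 0 ≤ diam Ω / 2), Measure.addHaar_ball volume _ hr.le,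
    finrank_euclideanSpace_fin, ENNReal.toReal_mul, ENNReal.toReal_mul, ENNReal.toReal_ofReal (by positivity),
    ENNReal.toReal_ofReal (by positivity), Real.rpow_natCast]
  have : diam Ω / 2 = r * (diam Ω / (2 * r)) := by field_simp
  rw [this, mul_pow]; ring

end

/-- Proposition 4.6, estimate (4.4). Let `1 < q < p`. For every open
bounded convex set `Ω ⊂ ℝ^N` and every open ball `B ⊂ ℝ^N`,
`μ_{p,q}(Ω) ≥ (π_p / (|B|^(1/q - 1/p) diam B))^p · (diam B / diam Ω)^(p + Np/q - N)`. -/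
theorem muPQ_ge_piP_ball_diam {N : ℕ} (hN : 2 ≤ N) (p q : ℝ) (hq : 1 < q) (hqp : q < p)
    (Ω : Set (EuclideanSpace ℝ (Fin N))) (hΩo : IsOpen Ω)
    (hΩb : Bornology.IsBounded Ω) (hΩc : Convex ℝ Ω) (hΩne : Ω.Nonempty)
    (c : EuclideanSpace ℝ (Fin N)) (r : ℝ) (hr : 0 < r) :
    muPQ p q Ω ≥
      (piP p / ((volume (ball c r)).toReal ^ (1 / q - 1 / p) * diam (ball c r))) ^ p *
        (diam (ball c r) / diam Ω) ^ (p + N * p / q - N) := by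
  obtain ⟨n, rfl⟩ : ∃ n, N = n + 1 := ⟨N - 1, by omega⟩
  have hd := diam_pos hΩo hΩb hΩne
  rw [ge_iff_le, muPQ]
  apply le_csInf
  · obtain ⟨v, K, h1, h2, h3⟩ := exists_test hΩo hΩb hΩne hq
    exact ⟨_, v, K, h1, h2, h3, rfl⟩
  rintro R ⟨v, K, hv, hne, h0, rfl⟩
  rw [rayleighQuot]
  refine le_trans ?_ (rayleigh_lower (by omega) hΩo hΩb hΩc hd hq hqp hv hne h0)
  rw [diam_ball_eq c hr.le]
  have pp : 0 ≤ piP p := by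
    rw [piP]
    have p1 : 0 < p - 1 := by linarith
    have p0 : 0 < p := by linarith
    have : 0 < Real.sin (π / p) := Real.sin_pos_of_pos_of_lt_pi (by positivity)
      (by rw [div_lt_iff₀ (by linarith)]; nlinarith [Real.pi_pos])
    have := Real.pi_pos
    positivity
  have hb : 0 < (volume (ball c r)).toReal :=
    ENNReal.toReal_pos (measure_ball_pos volume c hr).ne' measure_ball_lt_top.ne
  have hV : 0 < volume.real Ω :=
    ENNReal.toReal_pos (hΩo.measure_pos volume hΩne).ne' hΩb.measure_lt_top.ne
  exact final_alg pp hd hr hb hV hq hqp (vol_bound hΩo hΩb c hr)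
end

section
/- Let 1 < q < p. For every c > 0, the supremum of μ_{p,q}(Ω) over all open bounded convex sets Ω ⊂ ℝ^N with diam(Ω) ≥ c equals +∞; in particular, for every M > 0 there exists an open bounded convex Ω with diam(Ω) = c and μ_{p,q}(Ω) > M, so no upper bound for μ_{p,q} in terms of the diameter alone is possible when q < p. -/
open MeasureTheory Metric Set Real

theorem aux_pow {α : Type*} [MeasurableSpace α] (μ : Measure α) (f : α → ℝ)
    (hf : Measurable f) {a b : ℝ} (ha : 0 < a) (hab : a ≤ b) :
    (∫⁻ x, ‖f x‖ₑ ^ a ∂μ) ^ (b / a) ≤ (∫⁻ x, ‖f x‖ₑ ^ b ∂μ) * μ univ ^ (b / a - 1) := by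
  have hb : 0 < b := ha.trans_le hab
  have h := eLpNorm'_le_eLpNorm'_mul_rpow_measure_univ (μ := μ) ha hab
    hf.aestronglyMeasurable
  unfold eLpNorm' at h
  have h2 := ENNReal.rpow_le_rpow h hb.le
  rw [ENNReal.mul_rpow_of_nonneg _ _ hb.le, ← ENNReal.rpow_mul, ← ENNReal.rpow_mul,
    ← ENNReal.rpow_mul] at h2
  have e1 : 1 / a * b = b / a := by ring
  have e2 : 1 / b * b = 1 := by field_simp
  have e3 : (1 / a - 1 / b) * b = b / a - 1 := by field_simp
  rwa [e1, e2, e3, ENNReal.rpow_one] at h2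

section
variable {E : Type*} [NormedAddCommGroup E] [InnerProductSpace ℝ E] [FiniteDimensional ℝ E]
  [MeasurableSpace E] [BorelSpace E]

open Classical in
theorem aux_line (v : E → ℝ) (K : NNReal) (hv : LipschitzWith K v) (G : E → ℝ)
    (hG : ∀ z, G z = if DifferentiableAt ℝ v z then ‖fderiv ℝ v z‖ else K) (x y : E) :
    ‖v y - v x‖ₑ ≤ ‖y - x‖ₑ * ∫⁻ t in Ioc (0:ℝ) 1, ‖G (x + t • (y - x))‖ₑ := by
  set g : ℝ → ℝ := fun t => v (x + t • (y - x)) with hg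
  have hlip : LipschitzWith (K * ‖y - x‖₊) g := by
    refine LipschitzWith.of_dist_le_mul fun s t => ?_
    refine (hv.dist_le_mul _ _).trans (le_of_eq ?_)
    rw [dist_add_left, dist_eq_norm, ← sub_smul, norm_smul, dist_eq_norm]
    push_cast
    ring
  have h1 := (hlip.lipschitzOnWith (s := uIcc 0 1)).absolutelyContinuousOnInterval.integral_deriv_eq_sub
  have e1 : g 1 - g 0 = v y - v x := by simp [hg]
  rw [← e1, ← h1, intervalIntegral.integral_of_le zero_le_one,
    ← lintegral_const_mul' _ _ (by simp)]
  refine (enorm_integral_le_lintegral_enorm _).trans (lintegral_mono fun t => ?_)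
  have key : ‖deriv g t‖ ≤ ‖y - x‖ * G (x + t • (y - x)) := by
    rw [hG]
    split_ifs with hd
    · have hl : HasDerivAt (fun t : ℝ => x + t • (y - x)) (y - x) t := by
        simpa using ((hasDerivAt_id t).smul_const (y - x)).const_add x
      have := hd.hasFDerivAt.comp_hasDerivAt t hl
      have e : deriv g t = _ := this.deriv
      rw [e, mul_comm]
      exact ContinuousLinearMap.le_opNorm _ _
    · have := norm_deriv_le_of_lipschitz (x₀ := t) hlip
      simpa [mul_comm] using this
  have h0 : 0 ≤ G (x + t • (y - x)) := by
    rw [hG]; split_ifs <;> positivity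
  rw [← ofReal_norm, ← ofReal_norm, ← ofReal_norm, ← ENNReal.ofReal_mul (norm_nonneg _),
    Real.norm_of_nonneg h0]
  exact ENNReal.ofReal_le_ofReal key

theorem aux_cov (F : E → ENNReal) (hF : Measurable F) (a : E) {r : ℝ} (hr : 1 / 2 ≤ r) :
    ∫⁻ y, F (a + r • y) ≤ 2 ^ (Module.finrank ℝ E) * ∫⁻ y, F y := by
  have hr0 : 0 < r := by linarith
  have h1 : ∫⁻ y, F (a + r • y) = ∫⁻ z, F (a + z) ∂(Measure.map (r • ·) (volume : Measure E)) := by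
    rw [lintegral_map (by fun_prop) (by fun_prop)]
  rw [h1, Measure.map_addHaar_smul _ hr0.ne', lintegral_smul_measure,
    lintegral_add_left_eq_self, smul_eq_mul]
  gcongr
  have : (2 : ENNReal) ^ (Module.finrank ℝ E) = ENNReal.ofReal (2 ^ (Module.finrank ℝ E)) := by
    rw [ENNReal.ofReal_pow (by norm_num)]; simp
  rw [this]
  apply ENNReal.ofReal_le_ofReal
  rw [abs_of_pos (by positivity), ← inv_pow]
  gcongr
  rw [inv_le_comm₀ hr0 (by norm_num)]
  linarith

theorem aux_seg (Ω : Set E) (hΩ : IsOpen Ω) (hc : Convex ℝ Ω) 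
    (F : E → ENNReal) (hF : Measurable F) :
    ∫⁻ x in Ω, ∫⁻ y in Ω, ∫⁻ t in Ioc (0:ℝ) 1, F (x + t • (y - x)) ≤
      2 ^ (Module.finrank ℝ E) * volume Ω * ∫⁻ y in Ω, F y := by
  have hm := hΩ.measurableSet
  have s1 : ∀ x : E, ∫⁻ y in Ω, ∫⁻ t in Ioc (0:ℝ) 1, F (x + t • (y - x)) =
      ∫⁻ t in Ioc (0:ℝ) 1, ∫⁻ y in Ω, F (x + t • (y - x)) := fun x =>
    lintegral_lintegral_swap (by 
      apply Measurable.aemeasurable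
      exact hF.comp (by fun_prop))
  simp_rw [s1]
  rw [lintegral_lintegral_swap (by
    apply Measurable.aemeasurable
    exact Measurable.lintegral_prod_right'
      (f := fun z : (E × ℝ) × E => F (z.1.1 + z.1.2 • (z.2 - z.1.1))) (hF.comp (by fun_prop)))]
  have hF' : Measurable (Ω.indicator F) := hF.indicator hm
  have bound : ∀ t ∈ Ioc (0:ℝ) 1, ∫⁻ x in Ω, ∫⁻ y in Ω, F (x + t • (y - x)) ≤
      2 ^ (Module.finrank ℝ E) * volume Ω * ∫⁻ y in Ω, F y := by
    intro t ht
    have hin : ∀ x ∈ Ω, ∀ y ∈ Ω, F (x + t • (y - x)) = Ω.indicator F (x + t • (y - x)) := by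
      intro x hx y hy
      rw [indicator_of_mem]
      exact hc.add_smul_sub_mem hx hy ⟨ht.1.le, ht.2⟩
    rcases le_total (1/2) t with h | h
    · calc _ ≤ ∫⁻ x in Ω, 2 ^ (Module.finrank ℝ E) * ∫⁻ y in Ω, F y := by
            refine setLIntegral_mono' hm fun x hx => ?_
            rw [setLIntegral_congr_fun hm (fun y hy => hin x hx y hy), ← lintegral_indicator hm F]
            refine (setLIntegral_le_lintegral _ _).trans ?_
            refine le_trans (le_of_eq ?_) (aux_cov _ hF' (x - t • x) h)
            congr 1; ext y; congr 1
            rw [smul_sub]; abel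
        _ = _ := by rw [setLIntegral_const]; ring
    · rw [lintegral_lintegral_swap (by
        apply Measurable.aemeasurable
        exact hF.comp (by fun_prop))]
      calc _ ≤ ∫⁻ x in Ω, 2 ^ (Module.finrank ℝ E) * ∫⁻ y in Ω, F y := by
            refine setLIntegral_mono' hm fun y hy => ?_
            rw [setLIntegral_congr_fun hm (fun x hx => hin x hx y hy), ← lintegral_indicator hm F]
            refine (setLIntegral_le_lintegral _ _).trans ?_
            refine le_trans (le_of_eq ?_) (aux_cov _ hF' (t • y) (r := 1 - t) (by linarith))
            congr 1; ext x; congr 1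
            rw [smul_sub, sub_smul, one_smul]; abel
        _ = _ := by rw [setLIntegral_const]; ring
  refine (setLIntegral_mono' measurableSet_Ioc bound).trans ?_
  rw [setLIntegral_const]; simp

theorem aux_young (q : ℝ) (hq : 1 < q) (a b : ℝ) :
    |a| ^ (q - 2) * a * b ≤ (1 - 1 / q) * |a| ^ q + |b| ^ q / q := by
  have hq0 : 0 < q := by linarith
  have hconj : (q / (q - 1)).HolderConjugate q := by
    have := Real.HolderConjugate.conjExponent hq
    exact this.symm
  have h := Real.young_inequality (|a| ^ (q - 2) * a) b hconj
  have e : |(|a| ^ (q - 2) * a)| = |a| ^ (q - 1) := by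
    rw [abs_mul, abs_of_nonneg (by positivity)]
    rcases eq_or_ne a 0 with rfl | ha
    · simp [Real.zero_rpow (show q - 1 ≠ 0 by linarith)]
    · have : 0 < |a| := abs_pos.2 ha
      nth_rewrite 2 [← Real.rpow_one |a|]
      rw [← Real.rpow_add this]; congr 1; ring
  rw [e, ← Real.rpow_mul (abs_nonneg _)] at h
  have hq1 : q - 1 ≠ 0 := by linarith
  have e2 : (q - 1) * (q / (q - 1)) = q := by field_simp
  rw [e2] at h
  refine h.trans (le_of_eq ?_)
  field_simp

theorem aux_min (q : ℝ) (hq : 1 < q) (Ω : Set E) (hb : Bornology.IsBounded Ω)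
    (v : E → ℝ) (hv : Continuous v) (h0 : (∫ x in Ω, |v x| ^ (q - 2) * v x) = 0) (t : ℝ) :
    ∫ x in Ω, |v x| ^ q ≤ ∫ x in Ω, |v x - t| ^ q := by
  have hq0 : 0 < q := by linarith
  have hint : ∀ f : E → ℝ, Continuous f → IntegrableOn f Ω := fun f hf =>
    (hf.continuousOn.integrableOn_compact hb.isCompact_closure).mono_set subset_closure
  have i1 : IntegrableOn (fun x => |v x| ^ q) Ω :=
    hint _ (hv.abs.rpow_const fun _ => Or.inr hq0.le)
  have i2 : IntegrableOn (fun x => |v x - t| ^ q) Ω :=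
    hint _ ((hv.sub continuous_const).abs.rpow_const fun _ => Or.inr hq0.le)
  have ee : ∀ a : ℝ, a ≠ 0 → |a| ^ (q-2) * a * a = |a| ^ q := by
    intro a ha
    have : 0 < |a| := abs_pos.2 ha
    rw [mul_assoc, ← abs_mul_abs_self, ← sq, ← Real.rpow_natCast, ← Real.rpow_add this]
    congr 1; push_cast; ring
  have i3 : IntegrableOn (fun x => |v x| ^ (q - 2) * v x) Ω := by
    refine Integrable.mono' (i1.add (hint (fun _ => 1) continuous_const)) ?_ ?_
    · exact (((hv.measurable.abs).pow_const _).mul hv.measurable).aestronglyMeasurable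
    · refine ae_of_all _ fun x => ?_
      rw [Real.norm_eq_abs, abs_mul, abs_of_nonneg (by positivity : 0 ≤ |v x| ^ (q-2))]
      simp only [Pi.add_apply]
      rcases le_total |v x| 1 with h | h
      · rcases eq_or_ne (v x) 0 with h0 | h0
        · simp [h0]; positivity
        have hp : 0 < |v x| := abs_pos.2 h0
        have : |v x| ^ (q-2) * |v x| = |v x| ^ (q-1) := by
          nth_rewrite 2 [← Real.rpow_one |v x|]
          rw [← Real.rpow_add hp]; congr 1; ring
        rw [this]
        have := Real.rpow_le_one hp.le h (show 0 ≤ q - 1 by linarith)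
        have : 0 ≤ |v x| ^ q := by positivity
        linarith
      · have hne : v x ≠ 0 := by intro hh; rw [hh] at h; norm_num at h
        have := ee _ hne
        rw [mul_assoc, ← abs_mul_abs_self, ← mul_assoc] at this
        have h3 : 0 ≤ |v x| ^ (q-2) * |v x| := by positivity
        nlinarith
  have h1 : ∫ x in Ω, (|v x| ^ q - t * (|v x| ^ (q - 2) * v x)) ≤
      ∫ x in Ω, ((1 - 1 / q) * |v x| ^ q + |v x - t| ^ q / q) := by
    refine integral_mono (i1.sub (i3.const_mul t)) ((i1.const_mul _).add (i2.div_const _)) ?_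
    intro x
    have h := aux_young q hq (v x) (v x - t)
    simp only
    refine le_trans (le_of_eq ?_) h
    rcases eq_or_ne (v x) 0 with h0 | h0
    · simp [h0, Real.zero_rpow hq0.ne']
    · rw [← ee _ h0]; ring
  rw [integral_sub i1 (i3.const_mul t), integral_const_mul, h0,
    integral_add (i1.const_mul _) (i2.div_const _), integral_const_mul, integral_div] at h1
  have h2 : (∫ x in Ω, |v x| ^ q) / q ≤ (∫ x in Ω, |v x - t| ^ q) / q := by
    have : (1 - 1 / q) * (∫ x in Ω, |v x| ^ q) = (∫ x in Ω, |v x| ^ q) - (∫ x in Ω, |v x| ^ q) / q := by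
      ring
    linarith
  exact (div_le_div_iff_of_pos_right hq0).1 h2

open Classical in
theorem aux_poinc (q : ℝ) (hq : 1 < q) (c : ℝ) (Ω : Set E) (hΩ : IsOpen Ω)
    (hb : Bornology.IsBounded Ω) (hc : Convex ℝ Ω) (hne : Ω.Nonempty)
    (hd : ∀ x ∈ Ω, ∀ y ∈ Ω, ‖y - x‖ ≤ c)
    (v : E → ℝ) (K : NNReal) (hv : LipschitzWith K v) (G : E → ℝ) (hGm : Measurable G)
    (hG : ∀ z, G z = if DifferentiableAt ℝ v z then ‖fderiv ℝ v z‖ else K)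
    (h0 : (∫ x in Ω, |v x| ^ (q - 2) * v x) = 0) :
    ∫⁻ x in Ω, ‖v x‖ₑ ^ q ≤
      2 ^ (Module.finrank ℝ E) * ENNReal.ofReal c ^ q * ∫⁻ x in Ω, ‖G x‖ₑ ^ q := by
  have hq0 : 0 < q := by linarith
  have hm := hΩ.measurableSet
  have hvol0 : volume Ω ≠ 0 := (hΩ.measure_pos _ hne).ne'
  have hvolt : volume Ω ≠ ⊤ := hb.measure_lt_top.ne
  have conv : ∀ t : ℝ, ∫⁻ x in Ω, ‖v x - t‖ₑ ^ q = ENNReal.ofReal (∫ x in Ω, |v x - t| ^ q) := by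
    intro t
    have hcont : Continuous (fun x => |v x - t| ^ q) :=
      (hv.continuous.sub continuous_const).abs.rpow_const fun _ => Or.inr hq0.le
    rw [ofReal_integral_eq_lintegral_ofReal
      ((hcont.continuousOn.integrableOn_compact hb.isCompact_closure).mono_set subset_closure)
      (ae_of_all _ fun x => by simp only [Pi.zero_apply]; positivity)]
    refine lintegral_congr fun x => ?_
    rw [← ofReal_norm, ENNReal.ofReal_rpow_of_nonneg (norm_nonneg _) hq0.le, Real.norm_eq_abs]
  have hmin : ∀ t : ℝ, ∫⁻ x in Ω, ‖v x‖ₑ ^ q ≤ ∫⁻ x in Ω, ‖v x - t‖ₑ ^ q := by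
    intro t
    have h := conv 0
    simp only [sub_zero] at h
    rw [h, conv t]
    exact ENNReal.ofReal_le_ofReal (aux_min q hq Ω hb v hv.continuous h0 t)
  have hpt : ∀ x ∈ Ω, ∀ y ∈ Ω, ‖v y - v x‖ₑ ^ q ≤
      ENNReal.ofReal c ^ q * ∫⁻ t in Ioc (0:ℝ) 1, ‖G (x + t • (y - x))‖ₑ ^ q := by
    intro x hx y hy
    refine (ENNReal.rpow_le_rpow (aux_line v K hv G hG x y) hq0.le).trans ?_
    rw [ENNReal.mul_rpow_of_nonneg _ _ hq0.le]
    gcongr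
    · rw [← ofReal_norm]
      exact ENNReal.ofReal_le_ofReal (hd x hx y hy)
    · have := aux_pow (volume.restrict (Ioc (0:ℝ) 1)) (fun t => G (x + t • (y - x)))
        (hGm.comp (by fun_prop)) one_pos hq.le
      simpa using this
  have hGq : Measurable (fun z => ‖G z‖ₑ ^ q) := hGm.enorm.pow_const q
  have hfin : volume Ω * ∫⁻ x in Ω, ‖v x‖ₑ ^ q ≤
      volume Ω * (2 ^ (Module.finrank ℝ E) * ENNReal.ofReal c ^ q * ∫⁻ x in Ω, ‖G x‖ₑ ^ q) := by
    calc volume Ω * ∫⁻ x in Ω, ‖v x‖ₑ ^ q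
        = ∫⁻ x in Ω, ∫⁻ y in Ω, ‖v y‖ₑ ^ q := by rw [setLIntegral_const, mul_comm]
      _ ≤ ∫⁻ x in Ω, ∫⁻ y in Ω, ‖v y - v x‖ₑ ^ q := lintegral_mono fun x => hmin (v x)
      _ ≤ ∫⁻ x in Ω, ∫⁻ y in Ω, ENNReal.ofReal c ^ q *
            ∫⁻ t in Ioc (0:ℝ) 1, ‖G (x + t • (y - x))‖ₑ ^ q :=
          setLIntegral_mono' hm fun x hx => setLIntegral_mono' hm fun y hy => hpt x hx y hy
      _ = ENNReal.ofReal c ^ q * ∫⁻ x in Ω, ∫⁻ y in Ω,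
            ∫⁻ t in Ioc (0:ℝ) 1, ‖G (x + t • (y - x))‖ₑ ^ q := by
          have hct : ENNReal.ofReal c ^ q ≠ ⊤ :=
            ENNReal.rpow_ne_top_of_nonneg hq0.le ENNReal.ofReal_ne_top
          simp_rw [lintegral_const_mul' _ _ hct]
      _ ≤ ENNReal.ofReal c ^ q * (2 ^ (Module.finrank ℝ E) * volume Ω * ∫⁻ y in Ω, ‖G y‖ₑ ^ q) := by
          gcongr
          exact aux_seg Ω hΩ hc _ hGq
      _ = _ := by ring
  exact (ENNReal.mul_le_mul_iff_right hvol0 hvolt).1 hfin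

open Classical in
theorem aux_lower (p q : ℝ) (hq : 1 < q) (hqp : q < p) (c : ℝ) (hc0 : 0 < c) (Ω : Set E)
    (hΩ : IsOpen Ω)
    (hb : Bornology.IsBounded Ω) (hc : Convex ℝ Ω) (hne : Ω.Nonempty)
    (hd : ∀ x ∈ Ω, ∀ y ∈ Ω, ‖y - x‖ ≤ c)
    (v : E → ℝ) (K : NNReal) (hv : LipschitzOnWith K v (closure Ω))
    (hvne : ∃ x ∈ Ω, v x ≠ 0)
    (h0 : (∫ x in Ω, |v x| ^ (q - 2) * v x) = 0) :
    0 < (∫ x in Ω, |v x| ^ q) ^ (p / q) ∧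
    (∫ x in Ω, |v x| ^ q) ^ (p / q) ≤
      (2 ^ (Module.finrank ℝ E) * c ^ q) ^ (p / q) * (volume Ω).toReal ^ (p / q - 1) *
        ∫ x in Ω, ‖fderiv ℝ v x‖ ^ p := by
  have hq0 : 0 < q := by linarith
  have hp0 : 0 < p := by linarith
  have hm := hΩ.measurableSet
  have hvolt : volume Ω ≠ ⊤ := hb.measure_lt_top.ne
  obtain ⟨w, hw, hvw⟩ := hv.extend_real
  have hvwΩ : ∀ x ∈ Ω, v x = w x := fun x hx => hvw (subset_closure hx)
  have e0 : (∫ x in Ω, |w x| ^ (q - 2) * w x) = 0 := by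
    rw [← h0]
    exact setIntegral_congr_fun hm fun x hx => by simp only [hvwΩ x hx]
  have eq1 : (∫ x in Ω, |v x| ^ q) = ∫ x in Ω, |w x| ^ q :=
    setIntegral_congr_fun hm fun x hx => by simp only [hvwΩ x hx]
  have hcont : Continuous (fun x => |w x| ^ q) :=
      hw.continuous.abs.rpow_const fun _ => Or.inr hq0.le
  have hint : IntegrableOn (fun x => |w x| ^ q) Ω :=
    (hcont.continuousOn.integrableOn_compact hb.isCompact_closure).mono_set subset_closure
  have hpos : 0 < ∫ x in Ω, |w x| ^ q := by
    rw [setIntegral_pos_iff_support_of_nonneg_ae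
      (ae_of_all _ fun x => by simp only [Pi.zero_apply]; positivity) hint]
    refine IsOpen.measure_pos _ (hcont.isOpen_support.inter hΩ) ?_
    obtain ⟨x, hx, hx0⟩ := hvne
    refine ⟨x, ?_, hx⟩
    rw [hvwΩ x hx] at hx0
    have := abs_pos.2 hx0
    exact (by positivity : |w x| ^ q ≠ 0)
  set G : E → ℝ := fun z => if DifferentiableAt ℝ w z then ‖fderiv ℝ w z‖ else K with hG
  have hGm : Measurable G :=
    Measurable.ite (measurableSet_of_differentiableAt ℝ w) (measurable_fderiv ℝ w).norm
      measurable_const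
  have hG0 : ∀ z, 0 ≤ G z := fun z => by simp only [hG]; split_ifs <;> positivity
  have hGK : ∀ z, G z ≤ K := fun z => by
    simp only [hG]; split_ifs
    · exact norm_fderiv_le_of_lipschitz ℝ hw
    · exact le_rfl
  have hP := aux_poinc q hq c Ω hΩ hb hc hne hd w K hw G hGm (fun z => rfl) e0
  have hH := aux_pow (volume.restrict Ω) G hGm hq0 hqp.le
  rw [Measure.restrict_apply_univ] at hH
  have hpq : 0 ≤ p / q := by positivity
  have h1 := (ENNReal.rpow_le_rpow hP hpq)
  rw [ENNReal.mul_rpow_of_nonneg _ _ hpq] at h1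
  have h2 := h1.trans (mul_le_mul_right hH _)
  have hDle : ∫⁻ x in Ω, ‖G x‖ₑ ^ p ≤ ENNReal.ofReal K ^ p * volume Ω := by
    rw [← setLIntegral_const]
    refine lintegral_mono fun x => ?_
    gcongr
    rw [← ofReal_norm, Real.norm_of_nonneg (hG0 x)]
    exact ENNReal.ofReal_le_ofReal (hGK x)
  have hDt : ∫⁻ x in Ω, ‖G x‖ₑ ^ p ≠ ⊤ := by
    refine ne_top_of_le_ne_top (ENNReal.mul_ne_top ?_ hvolt) hDle
    exact ENNReal.rpow_ne_top_of_nonneg hp0.le ENNReal.ofReal_ne_top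
  have hs : 0 ≤ p / q - 1 := by
    rw [sub_nonneg, one_le_div hq0]; exact hqp.le
  have h3 := ENNReal.toReal_mono (by
    refine ENNReal.mul_ne_top ?_ (ENNReal.mul_ne_top hDt ?_)
    · refine ENNReal.rpow_ne_top_of_nonneg hpq (ENNReal.mul_ne_top (by simp) ?_)
      exact ENNReal.rpow_ne_top_of_nonneg hq0.le ENNReal.ofReal_ne_top
    · exact ENNReal.rpow_ne_top_of_nonneg hs hvolt) h2
  have ea : (∫⁻ x in Ω, ‖w x‖ₑ ^ q).toReal = ∫ x in Ω, |w x| ^ q := by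
    rw [integral_eq_lintegral_of_nonneg_ae
      (ae_of_all _ fun x => by simp only [Pi.zero_apply]; positivity)
      hcont.measurable.aestronglyMeasurable]
    congr 1
    refine lintegral_congr fun x => ?_
    rw [← ofReal_norm, ENNReal.ofReal_rpow_of_nonneg (norm_nonneg _) hq0.le, Real.norm_eq_abs]
  have eD : (∫⁻ x in Ω, ‖G x‖ₑ ^ p).toReal = ∫ x in Ω, ‖fderiv ℝ v x‖ ^ p := by
    have : ∫ x in Ω, ‖fderiv ℝ v x‖ ^ p = ∫ x in Ω, G x ^ p := by
      refine setIntegral_congr_ae hm ?_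
      filter_upwards [hw.ae_differentiableAt] with x hx hxΩ
      have : fderiv ℝ v x = fderiv ℝ w x := by
        apply Filter.EventuallyEq.fderiv_eq
        filter_upwards [hΩ.mem_nhds hxΩ] with y hy using hvwΩ y hy
      simp only [hG, hx, if_true, this]
    rw [this, integral_eq_lintegral_of_nonneg_ae
      (ae_of_all _ fun x => by have := hG0 x; simp only [Pi.zero_apply]; positivity)
      (hGm.pow_const p).aestronglyMeasurable]
    congr 1
    refine lintegral_congr fun x => ?_
    rw [← ofReal_norm, ENNReal.ofReal_rpow_of_nonneg (norm_nonneg _) hp0.le,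
      Real.norm_of_nonneg (hG0 x)]
  rw [← ENNReal.toReal_rpow, ea, ENNReal.toReal_mul, ENNReal.toReal_mul, eD, 
    ← ENNReal.toReal_rpow, ← ENNReal.toReal_rpow, ENNReal.toReal_mul, ← ENNReal.toReal_rpow,
    ENNReal.toReal_ofReal hc0.le, ENNReal.toReal_pow, ENNReal.toReal_ofNat] at h3
  rw [eq1]
  refine ⟨by positivity, h3.trans (le_of_eq ?_)⟩
  ring
end

theorem sup_muPQ_diam_eq_top {N : ℕ} (hN : 2 ≤ N) (p q : ℝ) (hq : 1 < q) (hqp : q < p)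
    (c : ℝ) (hc : 0 < c) :
    ∀ M : ℝ, 0 < M → ∃ Ω : Set (EuclideanSpace ℝ (Fin N)),
      IsOpen Ω ∧ Bornology.IsBounded Ω ∧ Convex ℝ Ω ∧ Ω.Nonempty ∧
      diam Ω = c ∧ M < muPQ p q Ω := by
  intro M hM
  have hq0 : 0 < q := by linarith
  have hs : 0 < p / q - 1 := by
    rw [sub_pos, one_lt_div hq0]; exact hqp
  let i0 : Fin N := ⟨0, by omega⟩
  let i1 : Fin N := ⟨1, by omega⟩
  have hi : i1 ≠ i0 := by simp [i0, i1]
  let S : ℕ → Set (EuclideanSpace ℝ (Fin N)) := fun n =>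
    ball 0 (c / 2) ∩ {x | |x i1| < 1 / ((n : ℝ) + 1)}
  have hcoord : ∀ i : Fin N, Continuous fun x : EuclideanSpace ℝ (Fin N) => x i := fun i => by
    fun_prop
  have hSo : ∀ n, IsOpen (S n) := fun n =>
    isOpen_ball.inter (isOpen_lt (hcoord i1).abs continuous_const)
  have hSb : ∀ n, Bornology.IsBounded (S n) := fun n => isBounded_ball.subset inter_subset_left
  have hSc : ∀ n, Convex ℝ (S n) := fun n => by
    refine (convex_ball _ _).inter ?_
    intro x hx y hy a b ha hb hab
    simp only [mem_setOf_eq, PiLp.add_apply, PiLp.smul_apply, smul_eq_mul, abs_lt] at *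
    constructor
    · have h1 := mul_le_mul_of_nonneg_left hx.1.le ha
      have h2 := mul_le_mul_of_nonneg_left hy.1.le hb
      rcases ha.eq_or_lt with h | h
      · have : b = 1 := by linarith
        subst this; subst h; linarith [hy.1]
      · have h1 := mul_lt_mul_of_pos_left hx.1 h
        have e : a * -(1 / ((n:ℝ) + 1)) + b * -(1 / ((n:ℝ) + 1)) = -(1 / ((n:ℝ) + 1)) := by
          rw [← add_mul, hab, one_mul]
        linarith
    · have h2 := mul_le_mul_of_nonneg_left hy.2.le hb
      rcases ha.eq_or_lt with h | h
      · have : b = 1 := by linarith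
        subst this; subst h; linarith [hy.2]
      · have h1 := mul_lt_mul_of_pos_left hx.2 h
        have e : a * (1 / ((n:ℝ) + 1)) + b * (1 / ((n:ℝ) + 1)) = (1 / ((n:ℝ) + 1)) := by
          rw [← add_mul, hab, one_mul]
        linarith
  have hmem : ∀ n (r : ℝ), |r| < c / 2 → EuclideanSpace.single i0 r ∈ S n := by
    intro n r hr
    refine ⟨by simpa using hr, ?_⟩
    simp only [mem_setOf_eq, EuclideanSpace.single_apply, hi, if_false, abs_zero]
    positivity
  have hSne : ∀ n, (S n).Nonempty := fun n => ⟨_, hmem n 0 (by simpa using hc)⟩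
  have hSd : ∀ n, ∀ x ∈ S n, ∀ y ∈ S n, ‖y - x‖ ≤ c := by
    intro n x hx y hy
    have h1 := hx.1
    have h2 := hy.1
    rw [mem_ball_zero_iff] at h1 h2
    linarith [norm_sub_le y x]
  have hdiam : ∀ n, diam (S n) = c := by
    intro n
    apply le_antisymm
    · exact diam_le_of_forall_dist_le hc.le fun x hx y hy => by
        rw [dist_eq_norm]; exact hSd n y hy x hx
    · refine le_of_forall_lt fun d hd => ?_
      obtain ⟨r, hr1, hr2⟩ := exists_between (max_lt hd hc)
      have hr0 : 0 < r := (le_max_right _ _).trans_lt hr1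
      have hdr : d < r := (le_max_left _ _).trans_lt hr1
      have h1 := dist_le_diam_of_mem (hSb n)
        (hmem n (r/2) (by rw [abs_of_pos (by positivity)]; linarith))
        (hmem n (-(r/2)) (by rw [abs_neg, abs_of_pos (by positivity)]; linarith))
      rw [EuclideanSpace.dist_single_same, Real.dist_eq, sub_neg_eq_add, add_halves,
        abs_of_pos hr0] at h1
      linarith
  have hvol : Filter.Tendsto (fun n => volume (S n)) Filter.atTop (nhds 0) := by
    have h := tendsto_measure_iInter_atTop (μ := volume) (s := S)
      (fun n => (hSo n).measurableSet.nullMeasurableSet)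
      (fun m n hmn => inter_subset_inter_right _ (fun x hx => by
        simp only [mem_setOf_eq] at hx ⊢
        refine hx.trans_le ?_
        apply one_div_le_one_div_of_le (by positivity)
        have : (m:ℝ) ≤ n := by exact_mod_cast hmn
        linarith))
      ⟨0, (hSb 0).measure_lt_top.ne⟩
    have hz : volume (⋂ n, S n) = 0 := by
      let L : EuclideanSpace ℝ (Fin N) →ₗ[ℝ] ℝ := (EuclideanSpace.proj i1 : _ →L[ℝ] ℝ).toLinearMap
      have hL : ∀ x, L x = x i1 := fun x => rfl
      have hker : LinearMap.ker L ≠ ⊤ := by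
        intro htop
        have : EuclideanSpace.single i1 (1:ℝ) ∈ LinearMap.ker L := by rw [htop]; trivial
        rw [LinearMap.mem_ker, hL] at this
        simp at this
      refine measure_mono_null ?_ (Measure.addHaar_submodule volume _ hker)
      intro x hx
      rw [SetLike.mem_coe, LinearMap.mem_ker, hL]
      by_contra hne
      obtain ⟨n, hn⟩ := exists_nat_one_div_lt (abs_pos.2 hne)
      have := (mem_iInter.1 hx n).2
      simp only [mem_setOf_eq] at this
      linarith
    rwa [hz] at h
  have hvol2 : Filter.Tendsto (fun n =>
      (2 ^ (Module.finrank ℝ (EuclideanSpace ℝ (Fin N))) * c ^ q) ^ (p / q) *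
        (volume (S n)).toReal ^ (p / q - 1)) Filter.atTop (nhds 0) := by
    have h := (ENNReal.tendsto_toReal (by simp : (0:ENNReal) ≠ ⊤)).comp hvol
    have h2 := (h.rpow_const (p := p / q - 1) (Or.inr hs.le)).const_mul
      ((2 ^ (Module.finrank ℝ (EuclideanSpace ℝ (Fin N))) * c ^ q) ^ (p / q))
    simpa [Real.zero_rpow hs.ne'] using h2
  obtain ⟨n, hn⟩ := (hvol2.eventually_lt_const (show (0:ℝ) < 1 / (M + 1) by positivity)).exists
  refine ⟨S n, hSo n, hSb n, hSc n, hSne n, hdiam n, ?_⟩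
  refine (lt_add_one M).trans_le ?_
  refine le_csInf ?_ ?_
  · refine ⟨_, fun x => x i0, 1, ?_, ?_, ?_, rfl⟩
    · refine (LipschitzWith.of_dist_le_mul fun x y => ?_).lipschitzOnWith
      simp only [NNReal.coe_one, one_mul]
      have := PiLp.norm_apply_le (x - y) i0
      simpa [dist_eq_norm] using this
    · refine ⟨_, hmem n (c/4) (by rw [abs_of_pos (by positivity)]; linarith), ?_⟩
      simp [hc.ne']
    · set f : EuclideanSpace ℝ (Fin N) → ℝ := fun x => |x i0| ^ (q - 2) * x i0 with hf
      change ∫ x in S n, f x = 0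
      rw [← integral_indicator (hSo n).measurableSet]
      have hodd : ∀ x, (S n).indicator f (-x) = - (S n).indicator f x := by
        intro x
        have hiff : -x ∈ S n ↔ x ∈ S n := by simp [S]
        by_cases hx : x ∈ S n
        · rw [indicator_of_mem hx, indicator_of_mem (hiff.2 hx)]
          simp [hf]
        · rw [indicator_of_notMem hx, indicator_of_notMem (fun h => hx (hiff.1 h))]
          simp
      have h := integral_neg_eq_self ((S n).indicator f) volume
      simp_rw [hodd] at h
      rw [integral_neg] at h
      linarith
  · rintro R ⟨v, K, hv, hvne, h0, rfl⟩
    obtain ⟨hpos, hle⟩ := aux_lower p q hq hqp c hc (S n) (hSo n) (hSb n) (hSc n) (hSne n)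
      (hSd n) v K hv hvne h0
    unfold rayleighQuot
    rw [le_div_iff₀ hpos]
    have hD : 0 ≤ ∫ x in S n, ‖fderiv ℝ v x‖ ^ p :=
      integral_nonneg fun x => by simp only [Pi.zero_apply]; positivity
    have h1 := hle.trans (mul_le_mul_of_nonneg_right hn.le hD)
    rw [one_div_mul_eq_div, le_div_iff₀ (by positivity)] at h1
    linarith
end
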